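/- arXiv:2509.08425 — 2 statements merged into one kernel-verified Lean document; each statement's English description precedes it below -/
import Mathlib

section
/- Let w(y|x) = (ν/2) e^{−ν|y−x|} be the Laplace noise channel (ν > 0), and consider block codes of length n satisfying the average absolute value constraint (1/n)∑_{k=1}^n |x_k(m)| ≤ s. Then limsup_{n→∞} sup over all constrained codebooks C and all decoders g of −(1/n) log_b Pr{g(Y) ≠ J} ≤ sup_{ρ ≥ 0} { (1/ln b) min{ νs, ρ ln(λ(νs,ρ)·νs + 1) + 1/λ(νs,ρ) + ln λ(νs,ρ) − 1 } − ρR }, where λ(νs,ρ) = [νs − 1 + √((νs − 1)² + 4(1+ρ)νs)] / (2(1+ρ)νs). -/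
open MeasureTheory Real Filter Set

noncomputable section

/-- The Laplace noise channel transition density `w(y|x) = (ν/2) e^{-ν|y-x|}`. -/
def lapDensity (ν x y : ℝ) : ℝ := (ν / 2) * Real.exp (-(ν * |y - x|))

/-- Density of the length-`n` channel output block `y` given the input block `x`. -/
def blockDensity (ν : ℝ) (n : ℕ) (x y : Fin n → ℝ) : ℝ := ∏ k, lapDensity ν (x k) (y k)

/-- The number of messages `M = ⌊b^(nR)⌋`. -/
def numMsg (b R : ℝ) (n : ℕ) : ℕ := ⌊b ^ ((n : ℝ) * R)⌋₊

/-- A decoder is given by pairwise disjoint open decision regions. -/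
def ValidDecoder (n M : ℕ) (D : Fin M → Set (Fin n → ℝ)) : Prop :=
  (∀ m, IsOpen (D m)) ∧ ∀ m m' : Fin M, m ≠ m' → Disjoint (D m) (D m')

/-- The error probability `Pr{g(Y) ≠ J}` for codebook `x` and decoder regions `D`,
with `J` uniform on the messages. -/
def errProb (ν : ℝ) (n M : ℕ) (x : Fin M → Fin n → ℝ) (D : Fin M → Set (Fin n → ℝ)) : ℝ :=
  (1 / (M : ℝ)) * ∑ m, ∫ y in (D m)ᶜ, blockDensity ν n (x m) y

/-- The set of error exponents `-(1/n) log_b Pr{g(Y) ≠ J}` achievable at block length `n`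
by codebooks satisfying the average absolute value constraint `s` and arbitrary decoders. -/
def expSet (ν s b R : ℝ) (n : ℕ) : Set ℝ :=
  { E | ∃ (x : Fin (numMsg b R n) → Fin n → ℝ) (D : Fin (numMsg b R n) → Set (Fin n → ℝ)),
      (∀ m, (1 / (n : ℝ)) * ∑ k, |x m k| ≤ s) ∧
      ValidDecoder n (numMsg b R n) D ∧
      E = -(1 / (n : ℝ)) * Real.logb b (errProb ν n (numMsg b R n) x D) }

/-- `λ(νs, ρ)` from Theorem 2. -/
def lamFun (νs ρ : ℝ) : ℝ :=
  (νs - 1 + Real.sqrt ((νs - 1) ^ 2 + 4 * (1 + ρ) * νs)) / (2 * (1 + ρ) * νs)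

/-!
A test channel `p` on which the code must fail transfers its failure to the true channel: if `p`
carries less information than the code's rate and has divergence `cost` per letter from the Laplace
channel, then the error probability is at least `exp (-n * cost)` up to subexponential factors.
Here `p` forgets its input with probability `θ`, replacing it by channel noise around `0` at cost
`θ * ν * s`, and otherwise adds Laplace noise of the larger scale `1 / (ν * lam)`. Optimising
`θ` and `lam` at a fixed rate is Lagrangian duality with multiplier `ρ`, and `lamFun` solves the
stationarity condition in `lam`.

Inputs are unbounded, so the changes of measure are controlled by moments of order `1 + τ` of the
density ratios, with a small `τ > 0` valid for all inputs at once.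
-/

open scoped Topology

section RenyiMoments

variable {α : Type*}

/-- The mixture of the densities `p` and `q` with weights `θ` and `1 - θ`. -/
def mixture (θ : ℝ) (p q : α → ℝ) (y : α) : ℝ := θ * p y + (1 - θ) * q y

lemma mixture_self (θ : ℝ) (p : α → ℝ) : mixture θ p p = p := by
  funext y
  unfold mixture
  ring

variable [MeasurableSpace α] {μ : Measure α}

/-- `p` is a strictly positive probability density with respect to `μ`. Integrability is not a
separate field: a Bochner integral equal to `1` forces it. -/
structure IsPosDensity (μ : Measure α) (p : α → ℝ) : Prop where
  pos : ∀ y, 0 < p y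
  integral_eq_one : ∫ y, p y ∂μ = 1

/-- The moment `∫ p (p / q) ^ τ`, which is the exponential of `τ` times the Rényi divergence of
order `1 + τ` of `p` from `q`, converges and is at most `C`. -/
structure RenyiMomentLE (μ : Measure α) (τ : ℝ) (p q : α → ℝ) (C : ℝ) : Prop where
  integrable : Integrable (fun y ↦ p y * (p y / q y) ^ τ) μ
  integral_le : ∫ y, p y * (p y / q y) ^ τ ∂μ ≤ C

lemma IsPosDensity.integrable {p : α → ℝ} (hp : IsPosDensity μ p) : Integrable p μ :=
  integrable_of_integral_eq_one hp.integral_eq_one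

lemma IsPosDensity.mixture {θ : ℝ} {p q : α → ℝ} (hθ₀ : 0 ≤ θ) (hθ₁ : θ ≤ 1)
    (hp : IsPosDensity μ p) (hq : IsPosDensity μ q) : IsPosDensity μ (mixture θ p q) where
  pos y := convex_Ioi (0 : ℝ) (hp.pos y) (hq.pos y) hθ₀ (sub_nonneg.2 hθ₁) (by ring)
  integral_eq_one := by
    unfold _root_.mixture
    rw [integral_add (hp.integrable.const_mul _) (hq.integrable.const_mul _), integral_const_mul,
      integral_const_mul, hp.integral_eq_one, hq.integral_eq_one]
    ring

lemma IsPosDensity.pi {ι 𝒴 : Type*} [Fintype ι] [MeasureSpace 𝒴]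
    [SigmaFinite (volume : Measure 𝒴)] {p : ι → 𝒴 → ℝ} (hp : ∀ k, IsPosDensity volume (p k)) :
    IsPosDensity volume fun y : ι → 𝒴 ↦ ∏ k, p k (y k) where
  pos y := Finset.prod_pos fun k _ ↦ (hp k).pos (y k)
  integral_eq_one := by
    rw [integral_fintype_prod_volume_eq_prod]
    exact Finset.prod_eq_one fun k _ ↦ (hp k).integral_eq_one

lemma IsPosDensity.sum_setIntegral_le_one {J : Type*} [Fintype J] {p : α → ℝ}
    (hp : IsPosDensity μ p) {D : J → Set α} (hD : ∀ m, MeasurableSet (D m))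
    (hdisj : Pairwise (Function.onFun Disjoint D)) : ∑ m, ∫ y in D m, p y ∂μ ≤ 1 := by
  rw [← integral_iUnion_fintype hD hdisj fun m ↦ hp.integrable.integrableOn,
    ← hp.integral_eq_one]
  exact setIntegral_le_integral hp.integrable (ae_of_all _ fun y ↦ (hp.pos y).le)

/-- `u (u / v) ^ τ = v (u / v) ^ (1 + τ)` is jointly convex in `(u, v)`, being the perspective of a
convex power function. -/
lemma mix_mul_div_rpow_le {θ τ a b c d : ℝ} (hθ₀ : 0 ≤ θ) (hθ₁ : θ ≤ 1) (hτ : 0 ≤ τ)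
    (ha : 0 < a) (hb : 0 < b) (hc : 0 < c) (hd : 0 < d) :
    (θ * a + (1 - θ) * b) * ((θ * a + (1 - θ) * b) / (θ * c + (1 - θ) * d)) ^ τ ≤
      θ * (a * (a / c) ^ τ) + (1 - θ) * (b * (b / d) ^ τ) := by
  have perspective {u v : ℝ} (hu : 0 < u) (hv : 0 < v) :
      u * (u / v) ^ τ = v * (u / v) ^ (1 + τ) := by
    rw [rpow_add (div_pos hu hv), rpow_one]
    field_simp
  have hθ : 0 ≤ 1 - θ := sub_nonneg.2 hθ₁
  have hu : 0 < θ * a + (1 - θ) * b := convex_Ioi (0 : ℝ) ha hb hθ₀ hθ (by ring)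
  have hv : 0 < θ * c + (1 - θ) * d := convex_Ioi (0 : ℝ) hc hd hθ₀ hθ (by ring)
  set v := θ * c + (1 - θ) * d with hv_def
  have hconv := (convexOn_rpow (show 1 ≤ 1 + τ by linarith)).2
    (show a / c ∈ Ici 0 from (div_pos ha hc).le) (show b / d ∈ Ici 0 from (div_pos hb hd).le)
    (show 0 ≤ θ * c / v by positivity) (show 0 ≤ (1 - θ) * d / v by positivity)
    (by rw [← add_div, ← hv_def, div_self hv.ne'])
  simp only [smul_eq_mul] at hconv
  rw [perspective hu hv, perspective ha hc, perspective hb hd]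
  calc v * ((θ * a + (1 - θ) * b) / v) ^ (1 + τ)
      = v * (θ * c / v * (a / c) + (1 - θ) * d / v * (b / d)) ^ (1 + τ) := by
        congr 2
        field_simp
    _ ≤ v * (θ * c / v * (a / c) ^ (1 + τ) + (1 - θ) * d / v * (b / d) ^ (1 + τ)) := by gcongr
    _ = θ * (c * (a / c) ^ (1 + τ)) + (1 - θ) * (d * (b / d) ^ (1 + τ)) := by field_simp

namespace RenyiMomentLE

variable {τ C : ℝ} {p q : α → ℝ}

lemma mono {C' : ℝ} (h : RenyiMomentLE μ τ p q C) (hC : C ≤ C') : RenyiMomentLE μ τ p q C' :=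
  ⟨h.integrable, h.integral_le.trans hC⟩

lemma of_le {G : α → ℝ} (hp : IsPosDensity μ p) (hq : IsPosDensity μ q) (hG : Integrable G μ)
    (hle : ∀ y, p y * (p y / q y) ^ τ ≤ G y) (hC : ∫ y, G y ∂μ ≤ C) :
    RenyiMomentLE μ τ p q C := by
  have hint : Integrable (fun y ↦ p y * (p y / q y) ^ τ) μ := by
    have hpm := hp.integrable.aemeasurable
    have hqm := hq.integrable.aemeasurable
    refine hG.mono' (hpm.mul ((hpm.div hqm).pow_const τ)).aestronglyMeasurable
      (ae_of_all _ fun y ↦ ?_)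
    have := hp.pos y
    have := hq.pos y
    rw [norm_of_nonneg (by positivity)]
    exact hle y
  exact ⟨hint, (integral_mono hint hG hle).trans hC⟩

lemma self (hp : IsPosDensity μ p) : RenyiMomentLE μ τ p p 1 :=
  of_le hp hp hp.integrable (fun y ↦ by simp [div_self (hp.pos y).ne']) hp.integral_eq_one.le

lemma mixture {θ C' : ℝ} {p' q' : α → ℝ} (hθ₀ : 0 ≤ θ) (hθ₁ : θ ≤ 1) (hτ : 0 ≤ τ)
    (hp : IsPosDensity μ p) (hp' : IsPosDensity μ p') (hq : IsPosDensity μ q)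
    (hq' : IsPosDensity μ q') (h : RenyiMomentLE μ τ p q C) (h' : RenyiMomentLE μ τ p' q' C') :
    RenyiMomentLE μ τ (mixture θ p p') (mixture θ q q') (θ * C + (1 - θ) * C') := by
  have := sub_nonneg.2 hθ₁
  refine of_le (hp.mixture hθ₀ hθ₁ hp') (hq.mixture hθ₀ hθ₁ hq')
    ((h.integrable.const_mul θ).add (h'.integrable.const_mul (1 - θ)))
    (fun y ↦ mix_mul_div_rpow_le hθ₀ hθ₁ hτ (hp.pos y) (hp'.pos y) (hq.pos y) (hq'.pos y)) ?_
  simp only [Pi.add_apply]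
  rw [integral_add (h.integrable.const_mul _) (h'.integrable.const_mul _), integral_const_mul,
    integral_const_mul]
  gcongr
  exacts [h.integral_le, h'.integral_le]

lemma of_mul_le {c : ℝ} {q' : α → ℝ} (hτ : 0 ≤ τ) (hc : 0 < c) (hp : IsPosDensity μ p)
    (hq : ∀ y, 0 < q y) (hq' : IsPosDensity μ q') (hle : ∀ y, c * q y ≤ q' y)
    (h : RenyiMomentLE μ τ p q C) : RenyiMomentLE μ τ p q' (c⁻¹ ^ τ * C) := by
  refine of_le hp hq' (h.integrable.const_mul (c⁻¹ ^ τ)) (fun y ↦ ?_) ?_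
  · have := hp.pos y
    have := hq y
    have := hq'.pos y
    calc p y * (p y / q' y) ^ τ ≤ p y * (p y / (c * q y)) ^ τ := by gcongr; exact hle y
      _ = c⁻¹ ^ τ * (p y * (p y / q y) ^ τ) := by
        rw [show p y / (c * q y) = c⁻¹ * (p y / q y) by field_simp,
          mul_rpow (by positivity) (by positivity)]
        ring
  · rw [integral_const_mul]
    gcongr
    exact h.integral_le

lemma pi {ι 𝒴 : Type*} [Fintype ι] [MeasureSpace 𝒴] [SigmaFinite (volume : Measure 𝒴)]
    {p q : ι → 𝒴 → ℝ} {C : ι → ℝ} (hp : ∀ k y, 0 ≤ p k y) (hq : ∀ k y, 0 ≤ q k y)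
    (h : ∀ k, RenyiMomentLE volume τ (p k) (q k) (C k)) :
    RenyiMomentLE volume τ (fun y : ι → 𝒴 ↦ ∏ k, p k (y k)) (fun y ↦ ∏ k, q k (y k))
      (∏ k, C k) := by
  have hprod (y : ι → 𝒴) : (∏ k, p k (y k)) * ((∏ k, p k (y k)) / ∏ k, q k (y k)) ^ τ =
      ∏ k, p k (y k) * (p k (y k) / q k (y k)) ^ τ := by
    rw [← Finset.prod_div_distrib,
      ← finsetProd_rpow _ _ fun k _ ↦ div_nonneg (hp k _) (hq k _), ← Finset.prod_mul_distrib]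
  constructor
  · simp only [hprod]
    rw [volume_pi]
    exact Integrable.fintype_prod fun k ↦ (h k).integrable
  · simp only [hprod]
    rw [integral_fintype_prod_volume_eq_prod fun k y ↦ p k y * (p k y / q k y) ^ τ]
    exact Finset.prod_le_prod (fun k _ ↦ integral_nonneg fun y ↦ mul_nonneg (hp k y)
      (rpow_nonneg (div_nonneg (hp k y) (hq k y)) τ)) fun k _ ↦ (h k).integral_le

/-- Chernoff's bound for the event `{p > A q}` makes the change of measure cost only `C / A ^ τ`. -/
lemma setIntegral_le {A : ℝ} (hτ : 0 ≤ τ) (hA : 0 < A) (hp : IsPosDensity μ p)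
    (hq : IsPosDensity μ q) (h : RenyiMomentLE μ τ p q C) (S : Set α) :
    ∫ y in S, p y ∂μ ≤ A * ∫ y in S, q y ∂μ + C / A ^ τ := by
  have hpos (y : α) : 0 ≤ p y * (p y / q y) ^ τ :=
    mul_nonneg (hp.pos y).le (rpow_nonneg (div_pos (hp.pos y) (hq.pos y)).le τ)
  have hpoint (y : α) : p y ≤ A * q y + p y * (p y / q y) ^ τ / A ^ τ := by
    have := hp.pos y
    have := hq.pos y
    rcases le_total (p y) (A * q y) with hle | hle
    · exact hle.trans (le_add_of_nonneg_right (div_nonneg (hpos y) (rpow_nonneg hA.le τ)))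
    · have hratio : 1 ≤ (p y / q y) ^ τ / A ^ τ := by
        rw [← div_rpow (by positivity) hA.le]
        refine one_le_rpow ?_ hτ
        rwa [le_div_iff₀ hA, one_mul, le_div_iff₀ (hq.pos y)]
      calc p y ≤ p y * ((p y / q y) ^ τ / A ^ τ) := le_mul_of_one_le_right (hp.pos y).le hratio
        _ ≤ A * q y + p y * (p y / q y) ^ τ / A ^ τ := by
          rw [← mul_div_assoc]
          exact le_add_of_nonneg_left (by positivity)
  have hqS := (hq.integrable.integrableOn (s := S)).const_mul A
  have hS := (h.integrable.integrableOn (s := S)).div_const (A ^ τ)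
  calc ∫ y in S, p y ∂μ
      ≤ ∫ y in S, (A * q y + p y * (p y / q y) ^ τ / A ^ τ) ∂μ :=
        setIntegral_mono hp.integrable.integrableOn (hqS.add hS) hpoint
    _ = A * ∫ y in S, q y ∂μ + (∫ y in S, p y * (p y / q y) ^ τ ∂μ) / A ^ τ := by
        rw [integral_add hqS hS, integral_const_mul, integral_div]
    _ ≤ A * ∫ y in S, q y ∂μ + C / A ^ τ := by
        gcongr
        exact (setIntegral_le_integral h.integrable (ae_of_all _ hpos)).trans h.integral_le

lemma setIntegral_le_exp {E η : ℝ} (hτ : 0 ≤ τ) (hp : IsPosDensity μ p) (hq : IsPosDensity μ q)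
    (h : RenyiMomentLE μ τ p q (exp (τ * (E - η)))) (S : Set α) :
    ∫ y in S, p y ∂μ ≤ exp E * ∫ y in S, q y ∂μ + exp (-(τ * η)) := by
  refine (h.setIntegral_le hτ (exp_pos E) hp hq S).trans_eq ?_
  rw [← exp_mul, ← exp_sub]
  ring_nf

end RenyiMomentLE

/-- Converse coding bound: a test channel `p` under which decoding fails, because `p` stays
within `exp C` of the message-independent output density `q`, while the true channel `w`
imitates `p` up to a factor `exp E`. -/
lemma card_le_sum_setIntegral_compl {J : Type*} [Fintype J] {τ E C η : ℝ} {p w : J → α → ℝ}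
    {q : α → ℝ} {D : J → Set α} (hτ : 0 ≤ τ)
    (hp : ∀ m, IsPosDensity μ (p m)) (hw : ∀ m, IsPosDensity μ (w m)) (hq : IsPosDensity μ q)
    (hpw : ∀ m, RenyiMomentLE μ τ (p m) (w m) (exp (τ * (E - η))))
    (hpq : ∀ m, RenyiMomentLE μ τ (p m) q (exp (τ * (C - η))))
    (hD : ∀ m, MeasurableSet (D m)) (hdisj : Pairwise (Function.onFun Disjoint D)) :
    (Fintype.card J : ℝ) ≤ Fintype.card J * (2 * exp (-(τ * η))) + exp C +
      exp E * ∑ m, ∫ y in (D m)ᶜ, w m y ∂μ := by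
  have hmessage (m : J) : 1 ≤ 2 * exp (-(τ * η)) + exp C * ∫ y in D m, q y ∂μ +
      exp E * ∫ y in (D m)ᶜ, w m y ∂μ := by
    have hsplit := integral_add_compl (hD m) (hp m).integrable
    rw [(hp m).integral_eq_one] at hsplit
    have hdecoded := (hpq m).setIntegral_le_exp hτ (hp m) hq (D m)
    have herror := (hpw m).setIntegral_le_exp hτ (hp m) (hw m) (D m)ᶜ
    linarith
  have hsum := Finset.sum_le_sum fun m (_ : m ∈ Finset.univ) ↦ hmessage m
  simp only [Finset.sum_add_distrib, ← Finset.mul_sum, Finset.sum_const, Finset.card_univ,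
    nsmul_eq_mul, mul_one] at hsum
  have hqD := mul_le_mul_of_nonneg_left (hq.sum_setIntegral_le_one hD hdisj) (exp_pos C).le
  linarith

/-- The test channel and the output density act letter by letter, so the moment bounds multiply
and the exponents `a`, `b` add up along each codeword. -/
lemma card_le_sum_setIntegral_compl_memoryless {ι J 𝒳 𝒴 : Type*} [Fintype ι] [Fintype J]
    [MeasureSpace 𝒴] [SigmaFinite (volume : Measure 𝒴)] {τ E C η : ℝ} {p w : 𝒳 → 𝒴 → ℝ}
    {q : 𝒴 → ℝ} {a b : 𝒳 → ℝ} {x : J → ι → 𝒳} {D : J → Set (ι → 𝒴)} (hτ : 0 ≤ τ)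
    (hp : ∀ x, IsPosDensity volume (p x)) (hw : ∀ x, IsPosDensity volume (w x))
    (hq : IsPosDensity volume q)
    (hpw : ∀ x, RenyiMomentLE volume τ (p x) (w x) (exp (τ * a x)))
    (hpq : ∀ x, RenyiMomentLE volume τ (p x) q (exp (τ * b x)))
    (ha : ∀ m, ∑ k, a (x m k) ≤ E - η) (hb : ∀ m, ∑ k, b (x m k) ≤ C - η)
    (hD : ∀ m, MeasurableSet (D m)) (hdisj : Pairwise (Function.onFun Disjoint D)) :
    (Fintype.card J : ℝ) ≤ Fintype.card J * (2 * exp (-(τ * η))) + exp C +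
      exp E * ∑ m, ∫ y in (D m)ᶜ, ∏ k, w (x m k) (y k) := by
  have moment_le {v : ι → 𝒴 → ℝ} {c : 𝒳 → ℝ} {m : J} {B : ℝ}
      (hv : ∀ k, IsPosDensity volume (v k))
      (h : ∀ k, RenyiMomentLE volume τ (p (x m k)) (v k) (exp (τ * c (x m k))))
      (hc : ∑ k, c (x m k) ≤ B) :
      RenyiMomentLE volume τ (fun y : ι → 𝒴 ↦ ∏ k, p (x m k) (y k)) (fun y ↦ ∏ k, v k (y k))
        (exp (τ * B)) := by
    refine (RenyiMomentLE.pi (fun k y ↦ ((hp (x m k)).pos y).le)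
      (fun k y ↦ ((hv k).pos y).le) h).mono ?_
    rw [← exp_sum, ← Finset.mul_sum]
    gcongr
  exact card_le_sum_setIntegral_compl hτ (fun m ↦ .pi fun k ↦ hp (x m k))
    (fun m ↦ .pi fun k ↦ hw (x m k)) (.pi fun _ ↦ hq)
    (fun m ↦ moment_le (fun k ↦ hw (x m k)) (fun k ↦ hpw (x m k)) (ha m))
    (fun m ↦ moment_le (fun _ ↦ hq) (fun k ↦ hpq (x m k)) (hb m)) hD hdisj

end RenyiMoments

section Laplace

variable {ν a c θ τ δ K : ℝ}

lemma isPosDensity_lapDensity (hν : 0 < ν) (x : ℝ) : IsPosDensity volume (lapDensity ν x) where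
  pos y := by
    unfold lapDensity
    positivity
  integral_eq_one := by
    unfold lapDensity
    have htail : ∫ t in Ioi (0 : ℝ), exp (-(ν * t)) = 1 / ν := by
      simpa [neg_mul] using integral_exp_mul_Ioi (neg_lt_zero.2 hν) 0
    rw [integral_sub_right_eq_self (fun y ↦ ν / 2 * exp (-(ν * |y|))) x, integral_const_mul,
      integral_comp_abs (f := fun t ↦ exp (-(ν * t))), htail]
    field_simp

lemma lapDensity_div_lapDensity_le (ha : 0 < a) (hc : 0 < c) (x x' y : ℝ) :
    lapDensity a x y / lapDensity c x' y ≤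
      exp (log (a / c) + c * |x - x'| + (c - a) * |y - x|) := by
  have hratio : lapDensity a x y / lapDensity c x' y =
      exp (log (a / c) + (c * |y - x'| - a * |y - x|)) := by
    unfold lapDensity
    rw [exp_add, exp_log (div_pos ha hc), exp_sub, exp_neg, exp_neg]
    field_simp
  have htriangle := mul_le_mul_of_nonneg_left (abs_sub_le y x x') hc.le
  rw [hratio, exp_le_exp]
  linarith

/-- Tilting a Laplace law by `exp (τ (c - a) |y - x|)` only changes its rate, so the moment is the
ratio of two normalising constants times the factor due to the shift of the centre. -/
lemma renyiMomentLE_lapDensity (ha : 0 < a) (hc : 0 < c) (hτ : 0 ≤ τ) (hlt : τ * (c / a - 1) < 1)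
    (x x' : ℝ) :
    RenyiMomentLE volume τ (lapDensity a x) (lapDensity c x')
      (exp (τ * (log (a / c) + c * |x - x'|)) / (1 - τ * (c / a - 1))) := by
  set u := 1 - τ * (c / a - 1) with hu_def
  set F := exp (τ * (log (a / c) + c * |x - x'|))
  have hu : 0 < u := sub_pos.2 hlt
  have htilt (y : ℝ) : lapDensity a x y * exp (τ * ((c - a) * |y - x|)) =
      lapDensity (a * u) x y / u := by
    have hexp : -(a * u * |y - x|) = -(a * |y - x|) + τ * ((c - a) * |y - x|) := by
      rw [hu_def]
      field_simp
      ring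
    unfold lapDensity
    rw [hexp, exp_add]
    field_simp
  have hau := isPosDensity_lapDensity (mul_pos ha hu) x
  refine .of_le (isPosDensity_lapDensity ha x) (isPosDensity_lapDensity hc x')
    (hau.integrable.const_mul (F / u)) (fun y ↦ ?_) ?_
  · have hx := (isPosDensity_lapDensity ha x).pos y
    have hx' := (isPosDensity_lapDensity hc x').pos y
    calc lapDensity a x y * (lapDensity a x y / lapDensity c x' y) ^ τ
        ≤ lapDensity a x y * exp (log (a / c) + c * |x - x'| + (c - a) * |y - x|) ^ τ := by
          gcongr
          exact lapDensity_div_lapDensity_le ha hc x x' y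
      _ = F * (lapDensity a x y * exp (τ * ((c - a) * |y - x|))) := by
          rw [← exp_mul, add_mul, exp_add, mul_comm _ τ, mul_comm _ τ]
          ring
      _ = F / u * lapDensity (a * u) x y := by
          rw [htilt]
          ring
  · rw [integral_const_mul, hau.integral_eq_one, mul_one]

/-- An upper bound for the Kullback–Leibler divergence of the Laplace law of rate `a` from the one
of rate `c` when their centres are at distance `d`; it is the divergence itself when `d = 0`. -/
def lapDiv (a c d : ℝ) : ℝ := log (a / c) + c * d + (c / a - 1)

lemma lapDiv_nonneg {d : ℝ} (ha : 0 < a) (hc : 0 < c) (hd : 0 ≤ d) : 0 ≤ lapDiv a c d := by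
  have hlog := one_sub_inv_le_log_of_pos (div_pos ha hc)
  rw [inv_div] at hlog
  have := mul_nonneg hc.le hd
  unfold lapDiv
  linarith

lemma lapDiv_self (ha : a ≠ 0) (d : ℝ) : lapDiv a a d = a * d := by
  simp [lapDiv, ha]

lemma lapDiv_mul_self_zero (ha : a ≠ 0) (t : ℝ) : lapDiv (a * t) a 0 = 1 / t + log t - 1 := by
  rw [lapDiv, mul_div_cancel_left₀ t ha, div_mul_cancel_left₀ ha, one_div]
  ring

/-- The rate `a / (1 + a * s)` minimises `lapDiv a · s`. -/
lemma lapDiv_div_one_add {s : ℝ} (ha : 0 < a) (hs : 0 ≤ s) :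
    lapDiv a (a / (1 + a * s)) s = log (1 + a * s) := by
  have : 0 < 1 + a * s := by positivity
  rw [lapDiv, div_div_cancel₀ ha.ne']
  field_simp
  ring

lemma eventually_exp_mul_div_one_sub_mul_le (U r : ℝ) (hδ : 0 < δ) :
    ∀ᶠ τ in 𝓝[>] (0 : ℝ), τ * r < 1 ∧
      ∀ u, |u| ≤ U → exp (τ * u) / (1 - τ * r) ≤ 1 + τ * (u + r + δ) := by
  have hsmall (Q : ℝ) {m : ℝ} (hm : 0 < m) : ∀ᶠ τ in 𝓝[>] (0 : ℝ), τ * Q < m := by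
    have hlim : Tendsto (fun τ : ℝ ↦ τ * Q) (𝓝[>] 0) (𝓝 0) := by
      simpa using (tendsto_id.mul_const Q).mono_left (nhdsWithin_le_nhds (a := (0 : ℝ)))
    exact hlim.eventually_lt_const hm
  filter_upwards [self_mem_nhdsWithin, hsmall r one_pos, hsmall U one_pos,
    hsmall (U ^ 2 + |r| * (U + |r| + δ)) hδ] with τ (hτ : 0 < τ) hr hU hquad
  refine ⟨hr, fun u hu ↦ ?_⟩
  have hτu : |τ * u| ≤ 1 := by
    rw [abs_mul, abs_of_pos hτ]
    exact (mul_le_mul_of_nonneg_left hu hτ.le).trans hU.le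
  have hexp : exp (τ * u) ≤ 1 + τ * u + (τ * u) ^ 2 := by
    linarith [(abs_le.1 (abs_exp_sub_one_sub_id_le hτu)).2]
  have hu_sq : u ^ 2 ≤ U ^ 2 := sq_le_sq' (abs_le.1 hu).1 (abs_le.1 hu).2
  have hcross : r * (u + r + δ) ≤ |r| * (U + |r| + δ) := by
    calc r * (u + r + δ) ≤ |r * (u + r + δ)| := le_abs_self _
      _ = |r| * |u + r + δ| := abs_mul _ _
      _ ≤ |r| * (|u| + |r| + |δ|) := by gcongr; exact abs_add_three _ _ _
      _ ≤ |r| * (U + |r| + δ) := by rw [abs_of_pos hδ]; gcongr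
  have herror : τ * (τ * (u ^ 2 + r * (u + r + δ))) ≤ τ * δ := by
    gcongr
    refine le_trans ?_ hquad.le
    gcongr
  rw [div_le_iff₀ (sub_pos.2 hr)]
  linarith

lemma eventually_renyiMomentLE_lapDensity (ha : 0 < a) (hc : 0 < c) (hδ : 0 < δ) (K : ℝ) :
    ∀ᶠ τ in 𝓝[>] (0 : ℝ), ∀ x x', |x - x'| ≤ K →
      RenyiMomentLE volume τ (lapDensity a x) (lapDensity c x')
        (1 + τ * (lapDiv a c |x - x'| + δ)) := by
  filter_upwards [self_mem_nhdsWithin,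
    eventually_exp_mul_div_one_sub_mul_le (|log (a / c)| + c * K) (c / a - 1) hδ]
    with τ (hτ : 0 < τ) ⟨hlt, hle⟩ x x' hx
  refine (renyiMomentLE_lapDensity ha hc hτ.le hlt x x').mono (hle _ ?_)
  refine (abs_add_le _ _).trans ?_
  rw [abs_mul, abs_abs, abs_of_pos hc]
  gcongr

/-- The test channel. With probability `θ` it forgets the input and outputs channel noise around
`0`; otherwise it adds Laplace noise of rate `a` to the input `x`. Inputs beyond `K` go through the
true channel, since moments of order `τ` are uniformly close to divergences only for bounded
inputs. -/
def testDensity (ν a θ K x : ℝ) : ℝ → ℝ :=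
  if |x| ≤ K then mixture θ (lapDensity ν 0) (lapDensity a x) else lapDensity ν x

/-- The output density against which the test channel is compared. The component of small rate `κ`
has weight `1 - exp (-δ)` and serves the inputs that the test channel leaves untouched. -/
def outputDensity (ν c κ θ δ : ℝ) : ℝ → ℝ :=
  mixture (exp (-δ)) (mixture θ (lapDensity ν 0) (lapDensity c 0)) (lapDensity κ 0)

lemma isPosDensity_testDensity (hν : 0 < ν) (ha : 0 < a) (hθ₀ : 0 ≤ θ) (hθ₁ : θ ≤ 1) (K x : ℝ) :
    IsPosDensity volume (testDensity ν a θ K x) := by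
  unfold testDensity
  split_ifs
  · exact (isPosDensity_lapDensity hν 0).mixture hθ₀ hθ₁ (isPosDensity_lapDensity ha x)
  · exact isPosDensity_lapDensity hν x

lemma isPosDensity_outputDensity {κ : ℝ} (hν : 0 < ν) (hc : 0 < c) (hκ : 0 < κ) (hθ₀ : 0 ≤ θ)
    (hθ₁ : θ ≤ 1) (hδ : 0 ≤ δ) : IsPosDensity volume (outputDensity ν c κ θ δ) :=
  ((isPosDensity_lapDensity hν 0).mixture hθ₀ hθ₁ (isPosDensity_lapDensity hc 0)).mixture
    (exp_pos _).le (exp_le_one_iff.2 (neg_nonpos.2 hδ)) (isPosDensity_lapDensity hκ 0)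

lemma eventually_renyiMomentLE_testDensity_lapDensity (hν : 0 < ν) (ha : 0 < a) (hθ₀ : 0 ≤ θ)
    (hθ₁ : θ ≤ 1) (hδ : 0 < δ) (K : ℝ) :
    ∀ᶠ τ in 𝓝[>] (0 : ℝ), ∀ x, RenyiMomentLE volume τ (testDensity ν a θ K x) (lapDensity ν x)
      (exp (τ * (θ * (ν * |x|) + (1 - θ) * lapDiv a ν 0 + δ))) := by
  filter_upwards [self_mem_nhdsWithin, eventually_renyiMomentLE_lapDensity hν hν hδ K,
    eventually_renyiMomentLE_lapDensity ha hν hδ 0] with τ (hτ : 0 < τ) hforget hrescale x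
  have hw := isPosDensity_lapDensity hν x
  have := sub_nonneg.2 hθ₁
  unfold testDensity
  split_ifs with hx
  · have hmix := RenyiMomentLE.mixture hθ₀ hθ₁ hτ.le (isPosDensity_lapDensity hν 0)
      (isPosDensity_lapDensity ha x) hw hw (hforget 0 x (by simpa using hx))
      (hrescale x x (by simp))
    rw [mixture_self, zero_sub, abs_neg, lapDiv_self hν.ne', sub_self, abs_zero] at hmix
    refine hmix.mono (le_trans (le_of_eq ?_) (add_one_le_exp _))
    ring
  · refine (RenyiMomentLE.self hw).mono (one_le_exp ?_)
    have := lapDiv_nonneg ha hν le_rfl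
    positivity

lemma renyiMomentLE_lapDensity_outputDensity {κ : ℝ} (hν : 0 < ν) (hc : 0 < c) (hκ : 0 < κ)
    (hκν : κ ≤ ν) (hθ₀ : 0 ≤ θ) (hθ₁ : θ ≤ 1) (hδ : 0 < δ) (hτ : 0 ≤ τ) {x : ℝ}
    (hx : log (ν / κ) - log (1 - exp (-δ)) ≤ κ * |x|) :
    RenyiMomentLE volume τ (lapDensity ν x) (outputDensity ν c κ θ δ)
      (exp (τ * (2 * κ * |x|))) := by
  have hweight : 0 < 1 - exp (-δ) := sub_pos.2 (exp_lt_one_iff.2 (neg_lt_zero.2 hδ))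
  have hκ0 := isPosDensity_lapDensity hκ 0
  have hshrink : κ / ν - 1 ≤ 0 := sub_nonpos.2 ((div_le_one hν).2 hκν)
  have hden : 1 ≤ 1 - τ * (κ / ν - 1) := by
    linarith [mul_nonpos_of_nonneg_of_nonpos hτ hshrink]
  have hmoment := (renyiMomentLE_lapDensity hν hκ hτ (by linarith) x 0).of_mul_le hτ hweight
    (isPosDensity_lapDensity hν x) hκ0.pos
    (isPosDensity_outputDensity (θ := θ) hν hc hκ hθ₀ hθ₁ hδ.le) fun y ↦
      le_add_of_nonneg_left (mul_nonneg (exp_pos _).le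
        (((isPosDensity_lapDensity hν 0).mixture hθ₀ hθ₁ (isPosDensity_lapDensity hc 0)).pos y).le)
  rw [sub_zero] at hmoment
  refine hmoment.mono ?_
  calc (1 - exp (-δ))⁻¹ ^ τ * (exp (τ * (log (ν / κ) + κ * |x|)) / (1 - τ * (κ / ν - 1)))
      ≤ (1 - exp (-δ))⁻¹ ^ τ * exp (τ * (log (ν / κ) + κ * |x|)) := by
        gcongr
        exact div_le_self (exp_pos _).le hden
    _ = exp (τ * (log (ν / κ) - log (1 - exp (-δ)) + κ * |x|)) := by
        rw [rpow_def_of_pos (inv_pos.2 hweight), log_inv, ← exp_add]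
        ring_nf
    _ ≤ exp (τ * (2 * κ * |x|)) := by
        gcongr
        linarith

lemma eventually_renyiMomentLE_testDensity_outputDensity {κ : ℝ} (hν : 0 < ν) (ha : 0 < a)
    (hc : 0 < c) (hκ : 0 < κ) (hκν : κ ≤ ν) (hθ₀ : 0 ≤ θ) (hθ₁ : θ ≤ 1) (hδ : 0 < δ)
    (hK : log (ν / κ) - log (1 - exp (-δ)) ≤ κ * K) :
    ∀ᶠ τ in 𝓝[>] (0 : ℝ), ∀ x,
      RenyiMomentLE volume τ (testDensity ν a θ K x) (outputDensity ν c κ θ δ)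
        (exp (τ * ((1 - θ) * lapDiv a c |x| + 2 * δ + 2 * κ * |x|))) := by
  filter_upwards [self_mem_nhdsWithin, eventually_renyiMomentLE_lapDensity ha hc hδ K]
    with τ (hτ : 0 < τ) hrescale x
  have hν0 := isPosDensity_lapDensity hν 0
  have hc0 := isPosDensity_lapDensity hc 0
  have hκ0 := isPosDensity_lapDensity hκ 0
  have := sub_nonneg.2 hθ₁
  have hout := isPosDensity_outputDensity hν hc hκ hθ₀ hθ₁ hδ.le
  have hmain := hν0.mixture hθ₀ hθ₁ hc0
  unfold testDensity
  split_ifs with hx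
  · have hax := isPosDensity_lapDensity ha x
    have hmix := RenyiMomentLE.mixture hθ₀ hθ₁ hτ.le hν0 hax hν0 hc0 (.self hν0)
      (hrescale x 0 (by simpa using hx))
    refine (hmix.of_mul_le hτ.le (exp_pos (-δ)) (hν0.mixture hθ₀ hθ₁ hax) hmain.pos hout
      fun y ↦ le_add_of_nonneg_right (mul_nonneg
        (sub_nonneg.2 (exp_le_one_iff.2 (neg_nonpos.2 hδ.le))) (hκ0.pos y).le)).mono ?_
    rw [← exp_neg, neg_neg, ← exp_mul, sub_zero]
    calc exp (δ * τ) * (θ * 1 + (1 - θ) * (1 + τ * (lapDiv a c |x| + δ)))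
        ≤ exp (δ * τ) * (τ * ((1 - θ) * lapDiv a c |x| + δ + 2 * κ * |x|) + 1) := by
          refine mul_le_mul_of_nonneg_left ?_ (exp_pos _).le
          have : 0 ≤ θ * (τ * δ) + τ * (2 * κ * |x|) := by positivity
          linarith
      _ ≤ exp (δ * τ) * exp (τ * ((1 - θ) * lapDiv a c |x| + δ + 2 * κ * |x|)) := by
          gcongr
          exact add_one_le_exp _
      _ = exp (τ * ((1 - θ) * lapDiv a c |x| + 2 * δ + 2 * κ * |x|)) := by
          rw [← exp_add]
          ring_nf
  · have hfar := hK.trans (mul_le_mul_of_nonneg_left (not_le.1 hx).le hκ.le)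
    refine (renyiMomentLE_lapDensity_outputDensity hν hc hκ hκν hθ₀ hθ₁ hδ hτ.le hfar).mono ?_
    gcongr
    have := lapDiv_nonneg ha hc (abs_nonneg x)
    exact le_add_of_nonneg_left (by positivity)

lemma exists_test_channel {s : ℝ} (hν : 0 < ν) (hs : 0 < s) (ha : 0 < a) (hθ₀ : 0 ≤ θ)
    (hθ₁ : θ ≤ 1) (hδ : 0 < δ) :
    ∃ τ > 0, ∃ (p : ℝ → ℝ → ℝ) (q : ℝ → ℝ),
      (∀ x, IsPosDensity volume (p x)) ∧ IsPosDensity volume q ∧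
      (∀ x, RenyiMomentLE volume τ (p x) (lapDensity ν x)
        (exp (τ * (θ * (ν * |x|) + (1 - θ) * lapDiv a ν 0 + δ)))) ∧
      ∃ A B, 0 ≤ B ∧ A + B * s ≤ (1 - θ) * log (1 + a * s) + 3 * δ ∧
        ∀ x, RenyiMomentLE volume τ (p x) q (exp (τ * (A + B * |x|))) := by
  have hc : 0 < a / (1 + a * s) := by positivity
  obtain ⟨κ, hκ, hκν, hκs⟩ : ∃ κ : ℝ, 0 < κ ∧ κ ≤ ν ∧ 2 * κ * s ≤ δ := by
    refine ⟨min ν (δ / (2 * s)), by positivity, min_le_left _ _, ?_⟩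
    have := (le_div_iff₀ (by positivity)).1 (min_le_right ν (δ / (2 * s)))
    linarith
  have hoptimal := lapDiv_div_one_add ha hs.le
  set c := a / (1 + a * s)
  set K := (log (ν / κ) - log (1 - exp (-δ))) / κ
  obtain ⟨τ, hτ, hinput, houtput⟩ := (eventually_mem_nhdsWithin.and
    ((eventually_renyiMomentLE_testDensity_lapDensity hν ha hθ₀ hθ₁ hδ K).and
    (eventually_renyiMomentLE_testDensity_outputDensity (κ := κ) hν ha hc hκ hκν hθ₀ hθ₁ hδ
      (mul_div_cancel₀ _ hκ.ne').ge))).exists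
  have := sub_nonneg.2 hθ₁
  refine ⟨τ, hτ, testDensity ν a θ K, outputDensity ν c κ θ δ,
    isPosDensity_testDensity hν ha hθ₀ hθ₁ K, isPosDensity_outputDensity hν hc hκ hθ₀ hθ₁ hδ.le,
    hinput, (1 - θ) * lapDiv a c 0 + 2 * δ, (1 - θ) * c + 2 * κ, by positivity, ?_, fun x ↦ ?_⟩
  · have haffine : (1 - θ) * lapDiv a c 0 + 2 * δ + ((1 - θ) * c + 2 * κ) * s =
        (1 - θ) * lapDiv a c s + 2 * δ + 2 * κ * s := by
      unfold lapDiv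
      ring
    rw [haffine, hoptimal]
    linarith
  · convert houtput x using 3
    unfold lapDiv
    ring

/-- The bound on the information rate, under the input constraint `s`, of the test channel that
forgets the input with probability `θ` and otherwise adds Laplace noise of rate `lam * ν`. It
depends on `ν` and `s` only through their product `νs`. -/
def mixRate (νs θ lam : ℝ) : ℝ := (1 - θ) * log (1 + lam * νs)

/-- The bound on the divergence per letter of the test channel of `mixRate` from the Laplace channel
of rate `ν`. -/
def mixCost (νs θ lam : ℝ) : ℝ := θ * νs + (1 - θ) * (1 / lam + log lam - 1)

lemma sum_add_mul_abs_le {ι : Type*} [Fintype ι] {A B S : ℝ} {x : ι → ℝ} (hB : 0 ≤ B)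
    (hx : ∑ k, |x k| ≤ Fintype.card ι * S) :
    ∑ k, (A + B * |x k|) ≤ Fintype.card ι * (A + B * S) := by
  rw [Finset.sum_add_distrib, Finset.sum_const, Finset.card_univ, nsmul_eq_mul, ← Finset.mul_sum]
  linarith [mul_le_mul_of_nonneg_left hx hB]

lemma exists_forall_natCast_le_add_errProb {s lam : ℝ} (hν : 0 < ν) (hs : 0 < s) (hθ₀ : 0 ≤ θ)
    (hθ₁ : θ ≤ 1) (hlam : 0 < lam) (hδ : 0 < δ) :
    ∃ τ > 0, ∀ (n M : ℕ) (x : Fin M → Fin n → ℝ) (D : Fin M → Set (Fin n → ℝ)),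
      (∀ m, ∑ k, |x m k| ≤ n * s) → ValidDecoder n M D →
      (M : ℝ) ≤ M * (2 * exp (-(τ * (n * δ)))) + exp (n * (mixRate (ν * s) θ lam + 4 * δ)) +
        exp (n * (mixCost (ν * s) θ lam + 2 * δ)) * (M * errProb ν n M x D) := by
  obtain ⟨τ, hτ, p, q, hp, hq, hpw, A, B, hB, hAB, hpq⟩ :=
    exists_test_channel hν hs (mul_pos hν hlam) hθ₀ hθ₁ hδ
  refine ⟨τ, hτ, fun n M x D hx hD ↦ ?_⟩
  have hsum {A B : ℝ} (hB : 0 ≤ B) (m : Fin M) : ∑ k, (A + B * |x m k|) ≤ n * (A + B * s) := by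
    simpa only [Fintype.card_fin] using sum_add_mul_abs_le (x := x m) hB (by simpa using hx m)
  have hcost (m : Fin M) : ∑ k, (θ * (ν * |x m k|) + (1 - θ) * lapDiv (ν * lam) ν 0 + δ) ≤
      n * (mixCost (ν * s) θ lam + 2 * δ) - n * δ := by
    convert hsum (A := (1 - θ) * (1 / lam + log lam - 1) + δ) (mul_nonneg hθ₀ hν.le) m using 1
    · rw [lapDiv_mul_self_zero hν.ne']
      exact Finset.sum_congr rfl fun k _ ↦ by ring
    · unfold mixCost
      ring
  have hrate (m : Fin M) : ∑ k, (A + B * |x m k|) ≤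
      n * (mixRate (ν * s) θ lam + 4 * δ) - n * δ := by
    refine (hsum hB m).trans ((mul_le_mul_of_nonneg_left hAB n.cast_nonneg).trans_eq ?_)
    rw [mixRate, mul_left_comm lam, ← mul_assoc ν]
    ring
  have hconverse := card_le_sum_setIntegral_compl_memoryless hτ.le hp (isPosDensity_lapDensity hν)
    hq hpw hpq hcost hrate (fun m ↦ (hD.1 m).measurableSet) hD.2
  rw [Fintype.card_fin] at hconverse
  convert hconverse using 3
  rcases M.eq_zero_or_pos with rfl | hM
  · simp
  · simp only [errProb, blockDensity]
    field_simp

lemma eventually_exp_le_errProb {s lam r ε : ℝ} (hν : 0 < ν) (hs : 0 < s) (hθ₀ : 0 ≤ θ)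
    (hθ₁ : θ ≤ 1) (hlam : 0 < lam) (hr : mixRate (ν * s) θ lam < r) (hε : 0 < ε) :
    ∀ᶠ n : ℕ in atTop, ∀ (M : ℕ) (x : Fin M → Fin n → ℝ) (D : Fin M → Set (Fin n → ℝ)),
      exp (n * r) ≤ 2 * M → (∀ m, ∑ k, |x m k| ≤ n * s) → ValidDecoder n M D →
      exp (-(n * (mixCost (ν * s) θ lam + ε))) ≤ errProb ν n M x D := by
  obtain ⟨δ, hδ, hδr, hδε⟩ : ∃ δ > 0, mixRate (ν * s) θ lam + 5 * δ ≤ r ∧ 3 * δ ≤ ε := by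
    refine ⟨min ((r - mixRate (ν * s) θ lam) / 5) (ε / 3),
      lt_min (by linarith) (by positivity), ?_, ?_⟩
    · linarith [min_le_left ((r - mixRate (ν * s) θ lam) / 5) (ε / 3)]
    · linarith [min_le_right ((r - mixRate (ν * s) θ lam) / 5) (ε / 3)]
  obtain ⟨τ, hτ, hconverse⟩ :=
    exists_forall_natCast_le_add_errProb hν hs hθ₀ hθ₁ hlam hδ
  have hdecay {t : ℝ} (ht : 0 < t) : Tendsto (fun n : ℕ ↦ exp (-(n * t))) atTop (𝓝 0) :=
    tendsto_exp_neg_atTop_nhds_zero.comp (tendsto_natCast_atTop_atTop.atTop_mul_const ht)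
  have hsmall : ∀ᶠ n : ℕ in atTop, 2 * exp (-(n * (τ * δ))) + 3 * exp (-(n * δ)) < 1 := by
    have hlim := ((hdecay (mul_pos hτ hδ)).const_mul 2).add ((hdecay hδ).const_mul 3)
    exact hlim.eventually_lt_const (by norm_num)
  filter_upwards [hsmall] with n hn M x D hM hx hD
  have hM₀ : (0 : ℝ) < M := by linarith [exp_pos (n * r)]
  have hlist : exp (n * (mixRate (ν * s) θ lam + 4 * δ)) ≤ M * (2 * exp (-(n * δ))) := by
    calc exp (n * (mixRate (ν * s) θ lam + 4 * δ)) ≤ exp (n * (r - δ)) := by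
          gcongr
          linarith
      _ = exp (n * r) * exp (-(n * δ)) := by
          rw [← exp_add]
          ring_nf
      _ ≤ 2 * M * exp (-(n * δ)) := by gcongr
      _ = M * (2 * exp (-(n * δ))) := by ring
  have herror : exp (-(n * δ)) ≤ exp (n * (mixCost (ν * s) θ lam + 2 * δ)) * errProb ν n M x D := by
    have := hconverse n M x D hx hD
    rw [mul_left_comm τ] at this
    refine le_of_mul_le_mul_left ?_ hM₀
    linarith [mul_le_mul_of_nonneg_left hn.le hM₀.le]
  calc exp (-(n * (mixCost (ν * s) θ lam + ε)))
      ≤ exp (-(n * (mixCost (ν * s) θ lam + 3 * δ))) := by gcongr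
    _ = exp (-(n * δ)) / exp (n * (mixCost (ν * s) θ lam + 2 * δ)) := by
        rw [← exp_sub]
        ring_nf
    _ ≤ errProb ν n M x D := (div_le_iff₀' (exp_pos _)).2 herror

end Laplace

section ErrorExponent

variable {ν s b R : ℝ}

lemma one_le_numMsg (hb : 1 ≤ b) (hR : 0 ≤ R) (n : ℕ) : 1 ≤ numMsg b R n :=
  Nat.one_le_floor_iff _ |>.2 (one_le_rpow hb (mul_nonneg n.cast_nonneg hR))

lemma exp_le_two_mul_numMsg (hb : 1 ≤ b) (hR : 0 ≤ R) (n : ℕ) :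
    exp (n * (R * log b)) ≤ 2 * numMsg b R n := by
  have hone : (1 : ℝ) ≤ numMsg b R n := mod_cast one_le_numMsg hb hR n
  have hfloor : b ^ ((n : ℝ) * R) < numMsg b R n + 1 := Nat.lt_floor_add_one _
  have hexp : exp (n * (R * log b)) = b ^ ((n : ℝ) * R) := by
    rw [rpow_def_of_pos (one_pos.trans_le hb)]
    ring_nf
  linarith

lemma errProb_empty {n M : ℕ} (hν : 0 < ν) (hM : M ≠ 0) (x : Fin M → Fin n → ℝ) :
    errProb ν n M x (fun _ ↦ ∅) = 1 := by
  have hblock (m : Fin M) : ∫ y, blockDensity ν n (x m) y = 1 :=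
    (IsPosDensity.pi fun k ↦ isPosDensity_lapDensity hν (x m k)).integral_eq_one
  simp [errProb, hblock, hM]

lemma zero_mem_expSet (hν : 0 < ν) (hs : 0 ≤ s) (hb : 1 ≤ b) (hR : 0 ≤ R) (n : ℕ) :
    0 ∈ expSet ν s b R n := by
  have hM : numMsg b R n ≠ 0 := Nat.one_le_iff_ne_zero.1 (one_le_numMsg hb hR n)
  refine ⟨0, fun _ ↦ ∅, fun _ ↦ by simpa using hs, ⟨fun _ ↦ isOpen_empty, by simp⟩, ?_⟩
  rw [errProb_empty hν hM, logb_one, mul_zero]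

lemma eventually_forall_mem_expSet_le {θ lam B : ℝ} (hν : 0 < ν) (hs : 0 < s) (hb : 1 < b)
    (hR : 0 ≤ R) (hθ₀ : 0 ≤ θ) (hθ₁ : θ ≤ 1) (hlam : 0 < lam)
    (hrate : mixRate (ν * s) θ lam < R * log b) (hcost : mixCost (ν * s) θ lam < log b * B) :
    ∀ᶠ n : ℕ in atTop, ∀ E ∈ expSet ν s b R n, E ≤ B := by
  have hlog := log_pos hb
  filter_upwards [eventually_exp_le_errProb hν hs hθ₀ hθ₁ hlam hrate (sub_pos.2 hcost),
    eventually_gt_atTop 0] with n hn hn₀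
  rintro _ ⟨x, D, hx, hD, rfl⟩
  have hn₀ : (0 : ℝ) < n := mod_cast hn₀
  have hle := hn _ x D (exp_le_two_mul_numMsg hb.le hR n)
    (fun m ↦ by simpa [inv_mul_le_iff₀ hn₀] using hx m) hD
  rw [add_sub_cancel] at hle
  have hlogle := (le_log_iff_exp_le ((exp_pos _).trans_le hle)).2 hle
  rw [logb, neg_mul, neg_le, one_div_mul_eq_div, le_div_iff₀ hn₀, le_div_iff₀ hlog]
  linarith

end ErrorExponent

section Optimization

variable {a lam r : ℝ}

lemma exists_mixRate_lt_mixCost_lt {θ T : ℝ} (hθ₀ : 0 ≤ θ) (hθ₁ : θ ≤ 1) (hr : 0 < r)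
    (hrate : mixRate a θ lam ≤ r) (hcost : mixCost a θ lam < T) :
    ∃ θ', 0 ≤ θ' ∧ θ' ≤ 1 ∧ mixRate a θ' lam < r ∧ mixCost a θ' lam < T := by
  have hcont : Continuous fun κ ↦ mixCost a (1 - (1 - κ) * (1 - θ)) lam := by
    unfold mixCost
    fun_prop
  have hnear : ∀ᶠ κ in 𝓝[>] 0, mixCost a (1 - (1 - κ) * (1 - θ)) lam < T :=
    nhdsWithin_le_nhds (hcont.continuousAt.eventually_lt_const (by simpa using hcost))
  obtain ⟨κ, hκ, hκ₀, hκ₁⟩ := (hnear.and (Ioo_mem_nhdsGT one_pos)).exists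
  have hprod : 0 ≤ (1 - κ) * (1 - θ) ∧ (1 - κ) * (1 - θ) ≤ 1 :=
    ⟨mul_nonneg (by linarith) (by linarith), mul_le_one₀ (by linarith) (by linarith) (by linarith)⟩
  refine ⟨1 - (1 - κ) * (1 - θ), by linarith, by linarith, ?_, hκ⟩
  calc mixRate a (1 - (1 - κ) * (1 - θ)) lam = (1 - κ) * mixRate a θ lam := by
        unfold mixRate
        ring
    _ ≤ (1 - κ) * r := mul_le_mul_of_nonneg_left hrate (by linarith)
    _ < r := by linarith [mul_pos hκ₀ hr]

/-- The slope `ρ` at which `lam` is a stationary point of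
`ρ * log (1 + lam * a) + 1 / lam + log lam - 1`, so that `lamFun a` inverts `dualRho a`. -/
def dualRho (a lam : ℝ) : ℝ := (1 - lam) * (1 + a * lam) / (a * lam ^ 2)

/-- The stationary value attained at `lam` for the slope `dualRho a lam`. -/
def dualCost (a lam : ℝ) : ℝ := dualRho a lam * log (lam * a + 1) + 1 / lam + log lam - 1

lemma dualRho_nonneg (ha : 0 < a) (hlam : 0 < lam) (hlam₁ : lam ≤ 1) : 0 ≤ dualRho a lam := by
  have := sub_nonneg.2 hlam₁
  unfold dualRho
  positivity

lemma lamFun_dualRho (ha : 0 < a) (hlam : 0 < lam) (hlam₁ : lam ≤ 1) :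
    lamFun a (dualRho a lam) = lam := by
  have hpos : 0 < 1 - lam + a * lam := by linarith [mul_pos ha hlam]
  have hone_add : 1 + dualRho a lam = (1 - lam + a * lam) / (a * lam ^ 2) := by
    unfold dualRho
    field_simp
    ring
  have hdiscrim : (a - 1) ^ 2 + 4 * (1 + dualRho a lam) * a =
      ((2 * (1 - lam + a * lam) + lam * (1 - a)) / lam) ^ 2 := by
    rw [hone_add]
    field_simp
    ring
  have hroot : 0 ≤ 2 * (1 - lam + a * lam) + lam * (1 - a) := by linarith [mul_pos ha hlam]
  unfold lamFun
  rw [hdiscrim, sqrt_sq (by positivity), hone_add]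
  field_simp
  ring

lemma continuousOn_dualCost (ha : 0 < a) : ContinuousOn (dualCost a) (Ioi 0) := by
  intro lam (hlam : 0 < lam)
  unfold dualCost dualRho
  have : a * lam ^ 2 ≠ 0 := by positivity
  have : lam * a + 1 ≠ 0 := by positivity
  have := hlam.ne'
  exact ContinuousAt.continuousWithinAt (by fun_prop (disch := assumption))

lemma mixCost_eq_dualCost_sub (a θ lam : ℝ) :
    mixCost a θ lam = θ * a + (1 - θ) * dualCost a lam - dualRho a lam * mixRate a θ lam := by
  rw [mixCost, dualCost, mixRate, add_comm (lam * a)]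
  ring

lemma exists_log_one_add_mul_le (ha : 0 < a) (hr : 0 < r) :
    ∃ lam ∈ Ioc (0 : ℝ) 1, log (1 + lam * a) ≤ r ∧ (lam = 1 ∨ log (1 + lam * a) = r) := by
  rcases le_total (log (1 + a)) r with hle | hge
  · exact ⟨1, by simp, by simpa using hle, .inl rfl⟩
  · have hlog : log (1 + (exp r - 1) / a * a) = r := by
      rw [div_mul_cancel₀ _ ha.ne', add_sub_cancel, log_exp]
    refine ⟨(exp r - 1) / a, ⟨div_pos (sub_pos.2 (one_lt_exp_iff.2 hr)) ha, ?_⟩, hlog.le, .inr hlog⟩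
    rw [div_le_one ha, sub_le_iff_le_add']
    exact (le_log_iff_exp_le (by positivity)).1 hge

/-- If time sharing is not needed, the best `lam` exhausts the rate `r` or equals `1`. Otherwise the
best `lam` has stationary value `a`, and `θ` is chosen to exhaust the rate. -/
lemma exists_mixRate_le_mixCost_le {T : ℝ} (ha : 0 < a) (hr : 0 < r)
    (hT : ∀ lam, 0 < lam → lam ≤ 1 → min a (dualCost a lam) - dualRho a lam * r ≤ T) :
    ∃ θ lam, 0 ≤ θ ∧ θ ≤ 1 ∧ 0 < lam ∧ mixRate a θ lam ≤ r ∧ mixCost a θ lam ≤ T := by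
  obtain ⟨lam₀, ⟨hlam₀, hlam₀_one⟩, hrate₀, hslack⟩ := exists_log_one_add_mul_le ha hr
  have hone : dualRho a 1 = 0 := by simp [dualRho]
  rcases le_or_gt (dualCost a lam₀) a with hle | hgt
  · have hcomplementary : dualRho a lam₀ * mixRate a 0 lam₀ = dualRho a lam₀ * r := by
      rcases hslack with rfl | hlog
      · simp [hone]
      · simp [mixRate, hlog]
    refine ⟨0, lam₀, le_rfl, zero_le_one, hlam₀, by simpa [mixRate] using hrate₀, ?_⟩
    have := hT lam₀ hlam₀ hlam₀_one
    rw [min_eq_right hle] at this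
    rw [mixCost_eq_dualCost_sub, hcomplementary]
    linarith
  · have hcost_one : dualCost a 1 = 0 := by simp [dualCost, hone]
    obtain ⟨lam, ⟨hlam₀_le, hlam_one⟩, hcost⟩ := intermediate_value_Icc' hlam₀_one
      ((continuousOn_dualCost ha).mono fun t ht ↦ hlam₀.trans_le ht.1)
      ⟨hcost_one.trans_le ha.le, hgt.le⟩
    have hlam := hlam₀.trans_le hlam₀_le
    have hlog₀ : log (1 + lam₀ * a) = r :=
      hslack.resolve_left fun h ↦ by subst h; linarith
    have hrle : r ≤ log (1 + lam * a) := by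
      rw [← hlog₀]
      gcongr
    have hlog := hr.trans_le hrle
    have hmixRate : mixRate a (1 - r / log (1 + lam * a)) lam = r := by
      rw [mixRate, sub_sub_cancel, div_mul_cancel₀ _ hlog.ne']
    refine ⟨1 - r / log (1 + lam * a), lam, sub_nonneg.2 ((div_le_one hlog).2 hrle),
      sub_le_self _ (div_pos hr hlog).le, hlam, hmixRate.le, ?_⟩
    have := hT lam hlam hlam_one
    rw [hcost, min_self] at this
    rw [mixCost_eq_dualCost_sub, hmixRate, hcost]
    linarith

/-- The values whose supremum over `ρ ≥ 0` bounds the error exponent. -/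
def exponentBounds (ν s b R : ℝ) : Set ℝ :=
  { v | ∃ ρ : ℝ, 0 ≤ ρ ∧
      v = (1 / log b) *
            min (ν * s)
              (ρ * log (lamFun (ν * s) ρ * (ν * s) + 1) + 1 / lamFun (ν * s) ρ +
                log (lamFun (ν * s) ρ) - 1) -
          ρ * R }

lemma bddAbove_exponentBounds (ν s : ℝ) {b R : ℝ} (hb : 1 ≤ b) (hR : 0 ≤ R) :
    BddAbove (exponentBounds ν s b R) := by
  refine ⟨1 / log b * (ν * s), ?_⟩
  rintro _ ⟨ρ, hρ, rfl⟩
  have := log_nonneg hb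
  refine (sub_le_self _ (mul_nonneg hρ hR)).trans ?_
  gcongr
  exact min_le_left _ _

lemma min_dualCost_sub_le_log_mul_sSup {ν s b R : ℝ} (ha : 0 < ν * s) (hb : 1 < b) (hR : 0 ≤ R)
    (hlam : 0 < lam) (hlam₁ : lam ≤ 1) :
    min (ν * s) (dualCost (ν * s) lam) - dualRho (ν * s) lam * (R * log b) ≤
      log b * sSup (exponentBounds ν s b R) := by
  have hlog := log_pos hb
  have hmem : 1 / log b * min (ν * s) (dualCost (ν * s) lam) - dualRho (ν * s) lam * R ∈
      exponentBounds ν s b R :=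
    ⟨dualRho (ν * s) lam, dualRho_nonneg ha hlam hlam₁, by
      rw [lamFun_dualRho ha hlam hlam₁, dualCost]⟩
  refine le_trans (le_of_eq ?_)
    (mul_le_mul_of_nonneg_left (le_csSup (bddAbove_exponentBounds ν s hb.le hR) hmem) hlog.le)
  field_simp

end Optimization

/-- Theorem 2 (case q = 1, r = 1): asymptotic upper bound on the error exponent of the
Laplace noise channel with the average absolute value constraint. -/
theorem laplace_abs_error_exponent_bound
    (ν s b R : ℝ) (hν : 0 < ν) (hs : 0 < s) (hb : 1 < b) (hR : 0 < R) :
    Filter.limsup (fun n : ℕ => sSup (expSet ν s b R n)) Filter.atTop ≤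
      sSup { v : ℝ | ∃ ρ : ℝ, 0 ≤ ρ ∧
        v = (1 / Real.log b) *
              min (ν * s)
                (ρ * Real.log (lamFun (ν * s) ρ * (ν * s) + 1) + 1 / lamFun (ν * s) ρ +
                  Real.log (lamFun (ν * s) ρ) - 1) -
            ρ * R } := by
  change _ ≤ sSup (exponentBounds ν s b R)
  have hlog := log_pos hb
  have hνs := mul_pos hν hs
  obtain ⟨θ, lam, hθ₀, hθ₁, hlam, hrate, hcost⟩ :=
    exists_mixRate_le_mixCost_le hνs (mul_pos hR hlog) fun _ hlam hlam₁ ↦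
      min_dualCost_sub_le_log_mul_sSup hνs hb hR.le hlam hlam₁
  refine le_of_forall_gt_imp_ge_of_dense fun B hB ↦ ?_
  obtain ⟨θ', hθ'₀, hθ'₁, hrate', hcost'⟩ := exists_mixRate_lt_mixCost_lt hθ₀ hθ₁
    (mul_pos hR hlog) hrate (hcost.trans_lt (mul_lt_mul_of_pos_left hB hlog))
  have hle : ∀ᶠ n in atTop, ∀ E ∈ expSet ν s b R n, E ≤ B :=
    eventually_forall_mem_expSet_le hν hs hb hR.le hθ'₀ hθ'₁ hlam hrate' hcost'
  have hzero (n : ℕ) : 0 ∈ expSet ν s b R n := zero_mem_expSet hν hs.le hb.le hR.le n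
  have hnonneg : ∀ᶠ n in atTop, 0 ≤ sSup (expSet ν s b R n) :=
    hle.mono fun n hn ↦ le_csSup ⟨B, hn⟩ (hzero n)
  exact limsup_le_of_le (isCoboundedUnder_le_of_eventually_le _ hnonneg)
    (hle.mono fun n hn ↦ csSup_le ⟨0, hzero n⟩ hn)
end
end

section
/- Let p ≥ 1 be real and let P_XY ∈ P_n(X_n × Y_n) be a joint type such that its marginals satisfy E_{P_X}[|X|^p] ≤ c_X and E_{P_Y}[|Y|^p] ≤ c_Y. Then the supports satisfy: |S(P_XY)| ≤ c₁ n^{(2 + p(α+β))/(2+p)}, |S(P_X)| ≤ c₂ n^{(1 + pα)/(1+p)}, and |S(P_Y)| ≤ c₃ n^{(1 + pβ)/(1+p)}, where c₁ = [ (3√π/2)( 2^{max{0, 1/2 − 1/p}} (c_X + c_Y)^{1/p} + 1/√6 ) ]^{2p/(2+p)}, c₂ = (4 c_X^{1/p} + 1)^{p/(1+p)}, and c₃ = (4 c_Y^{1/p} + 1)^{p/(1+p)}. -/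
/-!
Every atom of a type of denominator `n` has mass at least `1 / n`, so a moment bound `c` forces
`∑ ‖z‖ ^ p ≤ n * c` over the points `z` of the support, with no weights. On the other hand `N`
distinct lattice points cannot all be close to the origin, which bounds `∑ ‖z‖` from below, and
Hölder's inequality passes from the first moment to the `p`-th.

On the line the lower bound for `∑ |x|` is attained by consecutive lattice points around `0`. In the
plane, replace each lattice point by the cell around it: the union of the cells has area
`N * Δx * Δy`, and among the sets of given area the centred disc minimises `∫ ‖u‖`, as one sees by
comparing `∫ u in A, (R - ‖u‖)` with `∫ max 0 (R - ‖u‖)`, where `R` is the radius of the disc.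
Passing to the cell increases the mean of `‖u‖` by at most `√((Δx ^ 2 + Δy ^ 2) / 12) ≤ 1 / √6`.
-/

open Set

noncomputable section

/-- A joint type with denominator `n` on the product of lattice alphabets
`{iΔx : i ∈ ℤ} × {jΔy : j ∈ ℤ}`. -/
def IsJointType (n : ℕ) (Δx Δy : ℝ) (P : ℝ × ℝ → ℝ) : Prop :=
  (∀ z, 0 ≤ P z) ∧
    (∀ z, P z ≠ 0 → (∃ i : ℤ, z.1 = (i : ℝ) * Δx) ∧ ∃ j : ℤ, z.2 = (j : ℝ) * Δy) ∧
    (∀ z, ∃ k : ℕ, P z = (k : ℝ) / n) ∧ (Function.support P).Finite ∧ ∑ᶠ z, P z = 1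

/-- The `x`-marginal of a joint type. -/
def margX (P : ℝ × ℝ → ℝ) (x : ℝ) : ℝ := ∑ᶠ y, P (x, y)

/-- The `y`-marginal of a joint type. -/
def margY (P : ℝ × ℝ → ℝ) (y : ℝ) : ℝ := ∑ᶠ x, P (x, y)

/-- `c₁` of Lemma 2. -/
def c1 (p cX cY : ℝ) : ℝ :=
  ((3 * Real.sqrt Real.pi / 2) *
      ((2 : ℝ) ^ (max 0 (1 / 2 - 1 / p)) * (cX + cY) ^ (1 / p) + 1 / Real.sqrt 6)) ^
    (2 * p / (2 + p))

/-- `c₂` of Lemma 2. -/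
def c2 (p cX : ℝ) : ℝ := (4 * cX ^ (1 / p) + 1) ^ (p / (1 + p))

/-- `c₃` of Lemma 2. -/
def c3 (p cY : ℝ) : ℝ := (4 * cY ^ (1 / p) + 1) ^ (p / (1 + p))

open MeasureTheory Metric Module

section PowerMeans

lemma le_rpow_inv_mul_rpow_inv {x y z q : ℝ} (hx : 0 ≤ x) (hy : 0 ≤ y) (hz : 0 ≤ z) (hq : 0 < q)
    (h : x ^ q ≤ y * z) : x ≤ y ^ q⁻¹ * z ^ q⁻¹ := by
  rw [← Real.mul_rpow hy hz]
  exact (Real.le_rpow_inv_iff_of_pos hx (mul_nonneg hy hz) hq).2 h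

lemma card_rpow_mul_sum_le {ι : Type*} (s : Finset ι) {f : ι → ℝ} (hf : ∀ i, 0 ≤ f i) {p : ℝ}
    (hp : 1 ≤ p) :
    (s.card : ℝ) ^ (1 / p - 1) * ∑ i ∈ s, f i ≤ (∑ i ∈ s, f i ^ p) ^ (1 / p) := by
  rcases s.eq_empty_or_nonempty with rfl | hs
  · simpa using Real.rpow_nonneg le_rfl p⁻¹
  have hcard : (0 : ℝ) < s.card := by exact_mod_cast hs.card_pos
  have holder : ∑ i ∈ s, f i ≤ (s.card : ℝ) ^ (1 - 1 / p) * (∑ i ∈ s, f i ^ p) ^ (1 / p) := by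
    simpa using Real.inner_le_weight_mul_Lp_of_nonneg s hp 1 f (fun _ ↦ zero_le_one) hf
  calc (s.card : ℝ) ^ (1 / p - 1) * ∑ i ∈ s, f i
      ≤ (s.card : ℝ) ^ (1 / p - 1) *
          ((s.card : ℝ) ^ (1 - 1 / p) * (∑ i ∈ s, f i ^ p) ^ (1 / p)) := by gcongr
    _ = (∑ i ∈ s, f i ^ p) ^ (1 / p) := by
      rw [← mul_assoc, ← Real.rpow_add hcard]
      simp

lemma add_rpow_le_two_rpow_mul {a b q : ℝ} (ha : 0 ≤ a) (hb : 0 ≤ b) (hq : 0 ≤ q) :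
    (a + b) ^ q ≤ 2 ^ max 0 (q - 1) * (a ^ q + b ^ q) := by
  rcases le_total q 1 with h | h
  · rw [max_eq_left (by linarith), Real.rpow_zero, one_mul]
    exact Real.rpow_add_le_add_rpow ha hb hq h
  · rw [max_eq_right (by linarith)]
    lift a to NNReal using ha
    lift b to NNReal using hb
    exact_mod_cast NNReal.rpow_add_le_mul_rpow_add_rpow a b h

lemma sqrt_add_le_sqrt_add_sqrt {x y : ℝ} (hx : 0 ≤ x) (hy : 0 ≤ y) : √(x + y) ≤ √x + √y := by
  simpa only [Real.sqrt_eq_rpow] using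
    Real.rpow_add_le_add_rpow hx hy one_half_pos.le one_half_lt_one.le

lemma sqrt_sq_add_sq_rpow_le (x y : ℝ) {p : ℝ} (hp : 0 < p) :
    √(x ^ 2 + y ^ 2) ^ p ≤ (2 ^ max 0 (1 / 2 - 1 / p)) ^ p * (|x| ^ p + |y| ^ p) := by
  have sq_rpow_half (t : ℝ) : (t ^ 2) ^ (p / 2) = |t| ^ p := by
    rw [← sq_abs, ← Real.rpow_natCast_mul (abs_nonneg t)]
    congr 1
    push_cast
    ring
  have hexp : max 0 (1 / 2 - 1 / p) * p = max 0 (p / 2 - 1) := by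
    rw [max_mul_of_nonneg _ _ hp.le, zero_mul]
    congr 1
    field_simp
  calc √(x ^ 2 + y ^ 2) ^ p = (x ^ 2 + y ^ 2) ^ (p / 2) := by
        rw [Real.sqrt_eq_rpow, ← Real.rpow_mul (by positivity)]
        congr 1
        ring
    _ ≤ 2 ^ max 0 (p / 2 - 1) * ((x ^ 2) ^ (p / 2) + (y ^ 2) ^ (p / 2)) :=
        add_rpow_le_two_rpow_mul (sq_nonneg x) (sq_nonneg y) (by positivity)
    _ = (2 ^ max 0 (1 / 2 - 1 / p)) ^ p * (|x| ^ p + |y| ^ p) := by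
        rw [sq_rpow_half, sq_rpow_half, ← Real.rpow_mul zero_le_two, hexp]

end PowerMeans

section LatticePointsOnTheLine

lemma sum_Icc_sub_abs (R : ℕ) : ∑ i ∈ Finset.Icc (-R : ℤ) R, (R - |i|) = (R : ℤ) ^ 2 := by
  induction R with
  | zero => simp
  | succ k ih =>
    have hsplit : ∑ i ∈ Finset.Icc (-k : ℤ) k, ((k + 1 : ℤ) - |i|) = k ^ 2 + (2 * k + 1) := by
      have hcard : ((Finset.Icc (-k : ℤ) k).card : ℤ) = 2 * k + 1 := by
        rw [Int.card_Icc]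
        omega
      rw [← ih, ← hcard, Finset.card_eq_sum_ones, Nat.cast_sum, ← Finset.sum_add_distrib]
      exact Finset.sum_congr rfl fun i _ ↦ by push_cast; ring
    push_cast
    rw [Finset.sum_Icc_succ_eq_add_endpoints, hsplit, abs_neg, abs_of_nonneg (by positivity)]
    ring

lemma card_mul_sub_sq_le_sum_abs (T : Finset ℤ) (R : ℕ) :
    (T.card : ℤ) * R - R ^ 2 ≤ ∑ i ∈ T, |i| := by
  have key : ∑ i ∈ T, ((R : ℤ) - |i|) ≤ ∑ i ∈ Finset.Icc (-R : ℤ) R, ((R : ℤ) - |i|) :=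
    calc ∑ i ∈ T, ((R : ℤ) - |i|) ≤ ∑ i ∈ T with |i| ≤ (R : ℤ), ((R : ℤ) - |i|) := by
          rw [Finset.sum_filter]
          refine Finset.sum_le_sum fun i _ ↦ ?_
          split_ifs <;> omega
      _ ≤ ∑ i ∈ Finset.Icc (-R : ℤ) R, ((R : ℤ) - |i|) := by
          refine Finset.sum_le_sum_of_subset_of_nonneg (fun i hi ↦ ?_) fun i hi _ ↦ ?_
          · exact Finset.mem_Icc.2 (abs_le.1 (Finset.mem_filter.1 hi).2)
          · exact sub_nonneg.2 (abs_le.2 (Finset.mem_Icc.1 hi))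
  rw [sum_Icc_sub_abs, Finset.sum_sub_distrib, Finset.sum_const, nsmul_eq_mul] at key
  linarith

lemma card_sq_sub_one_le_four_mul_sum_abs (T : Finset ℤ) :
    (T.card : ℤ) ^ 2 - 1 ≤ 4 * ∑ i ∈ T, |i| := by
  have key := card_mul_sub_sq_le_sum_abs T (T.card / 2)
  rcases Nat.even_or_odd' T.card with ⟨k, hk | hk⟩
  · have hhalf : T.card / 2 = k := by omega
    rw [hhalf, hk] at key
    rw [hk]
    push_cast at key ⊢
    linarith
  · have hhalf : T.card / 2 = k := by omega
    rw [hhalf, hk] at key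
    rw [hk]
    push_cast at key ⊢
    linarith

lemma card_sq_sub_one_mul_le_four_mul_sum_abs {Δ : ℝ} (hΔ : 0 < Δ) {s : Finset ℝ}
    (hs : ∀ x ∈ s, ∃ i : ℤ, x = i * Δ) :
    ((s.card : ℝ) ^ 2 - 1) * Δ ≤ 4 * ∑ x ∈ s, |x| := by
  classical
  have hinj : Function.Injective fun i : ℤ ↦ (i : ℝ) * Δ := fun i j h ↦ by
    exact_mod_cast mul_right_cancel₀ hΔ.ne' h
  obtain ⟨T, -, rfl⟩ : ∃ T : Finset ℤ, (T : Set ℤ) ⊆ univ ∧ T.image (fun i : ℤ ↦ (i : ℝ) * Δ) = s :=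
    Finset.subset_set_image_iff.1 fun x hx ↦ by simpa [eq_comm] using hs x hx
  rw [Finset.card_image_of_injective _ hinj, Finset.sum_image hinj.injOn]
  simp only [abs_mul, abs_of_pos hΔ]
  rw [← Finset.sum_mul, ← mul_assoc]
  gcongr
  exact_mod_cast card_sq_sub_one_le_four_mul_sum_abs T

lemma card_rpow_le_of_subset_lattice {p Δ : ℝ} (hp : 1 ≤ p) (hΔ : 0 < Δ) {s : Finset ℝ}
    (hs : ∀ x ∈ s, ∃ i : ℤ, x = i * Δ) :
    (s.card : ℝ) ^ (1 / p + 1) ≤ 4 * (∑ x ∈ s, |x| ^ p) ^ (1 / p) / Δ + 1 := by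
  have hp0 : 0 < p := by linarith
  rcases s.eq_empty_or_nonempty with rfl | hne
  · have h : (0 : ℝ) ^ (1 / p + 1) = 0 := Real.zero_rpow (by positivity)
    simp only [Finset.card_empty, Nat.cast_zero, h]
    positivity
  have hN : 1 ≤ (s.card : ℝ) := by exact_mod_cast hne.card_pos
  set N : ℝ := (s.card : ℝ)
  have hN0 : 0 < N := by linarith
  have hsum : N ^ 2 - 1 ≤ 4 * (∑ x ∈ s, |x|) / Δ :=
    (le_div_iff₀ hΔ).2 (card_sq_sub_one_mul_le_four_mul_sum_abs hΔ hs)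
  have hmean := card_rpow_mul_sum_le s (f := fun x : ℝ ↦ |x|) (fun x ↦ abs_nonneg x) hp
  calc N ^ (1 / p + 1) = N ^ (1 / p - 1) * (N ^ 2 - 1) + N ^ (1 / p - 1) := by
        rw [← Real.rpow_natCast N 2, mul_sub, ← Real.rpow_add hN0]
        ring_nf
    _ ≤ N ^ (1 / p - 1) * (4 * (∑ x ∈ s, |x|) / Δ) + 1 := by
        gcongr
        refine Real.rpow_le_one_of_one_le_of_nonpos hN ?_
        rw [sub_nonpos, div_le_one hp0]
        exact hp
    _ = 4 * (N ^ (1 / p - 1) * ∑ x ∈ s, |x|) / Δ + 1 := by ring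
    _ ≤ 4 * (∑ x ∈ s, |x| ^ p) ^ (1 / p) / Δ + 1 := by gcongr

end LatticePointsOnTheLine

section Rearrangement

variable {E : Type*} [NormedAddCommGroup E] [NormedSpace ℝ E] [FiniteDimensional ℝ E]
  [MeasurableSpace E] [BorelSpace E] (μ : Measure E) [μ.IsAddHaarMeasure]

lemma integrable_max_sub_norm (R : ℝ) : Integrable (fun x : E ↦ max 0 (R - ‖x‖)) μ := by
  have : ProperSpace E := FiniteDimensional.proper_real E
  refine Continuous.integrable_of_hasCompactSupport (by fun_prop)
    (HasCompactSupport.intro (isCompact_closedBall 0 R) fun x hx ↦ max_eq_left ?_)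
  rw [mem_closedBall_zero_iff, not_le] at hx
  linarith

lemma integral_Ioi_pow_mul_max_sub (d : ℕ) {R : ℝ} (hR : 0 ≤ R) :
    ∫ r in Ioi 0, r ^ d * max 0 (R - r) = R ^ (d + 2) / ((d + 1) * (d + 2)) := by
  calc ∫ r in Ioi 0, r ^ d * max 0 (R - r)
      = ∫ r in Ioc 0 R, r ^ d * max 0 (R - r) := by
        refine setIntegral_eq_of_subset_of_forall_sdiff_eq_zero measurableSet_Ioi
          Ioc_subset_Ioi_self fun r hr ↦ ?_
        have hRr : R < r := not_le.1 fun h ↦ hr.2 ⟨hr.1, h⟩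
        rw [max_eq_left (by linarith), mul_zero]
    _ = ∫ r in 0..R, (R * r ^ d - r ^ (d + 1)) := by
        rw [intervalIntegral.integral_of_le hR]
        refine setIntegral_congr_fun measurableSet_Ioc fun r hr ↦ ?_
        simp only [max_eq_right (sub_nonneg.2 hr.2)]
        ring
    _ = R ^ (d + 2) / ((d + 1) * (d + 2)) := by
        rw [intervalIntegral.integral_sub (Continuous.intervalIntegrable (by fun_prop) _ _)
          (Continuous.intervalIntegrable (by fun_prop) _ _), intervalIntegral.integral_const_mul,
          integral_pow, integral_pow]
        push_cast
        field_simp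
        ring

lemma integral_max_sub_norm [Nontrivial E] {R : ℝ} (hR : 0 ≤ R) :
    ∫ x : E, max 0 (R - ‖x‖) ∂μ =
      μ.real (ball 0 1) * R ^ (finrank ℝ E + 1) / (finrank ℝ E + 1) := by
  obtain ⟨d, hd⟩ := Nat.exists_eq_succ_of_ne_zero (finrank_pos (R := ℝ) (M := E)).ne'
  rw [integral_fun_norm_addHaar μ fun r ↦ max 0 (R - r), hd]
  simp only [Nat.succ_eq_add_one, add_tsub_cancel_right, smul_eq_mul, nsmul_eq_mul,
    integral_Ioi_pow_mul_max_sub d hR]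
  push_cast
  field_simp
  ring

lemma mul_measureReal_sub_setIntegral_norm_le [Nontrivial E] {A : Set E} (hA : μ A ≠ ⊤)
    (hint : IntegrableOn (fun x : E ↦ ‖x‖) A μ) {R : ℝ} (hR : 0 ≤ R) :
    R * μ.real A - ∫ x in A, ‖x‖ ∂μ ≤
      μ.real (ball 0 1) * R ^ (finrank ℝ E + 1) / (finrank ℝ E + 1) :=
  have hconst : IntegrableOn (fun _ : E ↦ R) A μ := integrableOn_const hA
  calc R * μ.real A - ∫ x in A, ‖x‖ ∂μ = ∫ x in A, (R - ‖x‖) ∂μ := by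
        rw [integral_sub hconst hint, setIntegral_const, smul_eq_mul, mul_comm]
    _ ≤ ∫ x in A, max 0 (R - ‖x‖) ∂μ :=
        setIntegral_mono (hconst.sub hint) (integrable_max_sub_norm μ R).integrableOn
          fun _ ↦ le_max_right _ _
    _ ≤ ∫ x, max 0 (R - ‖x‖) ∂μ :=
        setIntegral_le_integral (integrable_max_sub_norm μ R)
          (Filter.Eventually.of_forall fun _ ↦ le_max_left _ _)
    _ = μ.real (ball 0 1) * R ^ (finrank ℝ E + 1) / (finrank ℝ E + 1) := integral_max_sub_norm μ hR

lemma two_thirds_mul_volume_mul_sqrt_le_setIntegral {A : Set (ℝ × ℝ)} (hA : volume A ≠ ⊤)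
    (hint : IntegrableOn (fun u : ℝ × ℝ ↦ √(u.1 ^ 2 + u.2 ^ 2)) A) :
    2 / 3 * volume.real A * √(volume.real A / Real.pi) ≤ ∫ u in A, √(u.1 ^ 2 + u.2 ^ 2) := by
  let e := Complex.measurableEquivRealProd
  have he : MeasurePreserving e := Complex.volume_preserving_equiv_real_prod
  have hnorm : (fun u : ℝ × ℝ ↦ √(u.1 ^ 2 + u.2 ^ 2)) ∘ e = fun z ↦ ‖z‖ :=
    funext fun z ↦ (Complex.norm_eq_sqrt_sq_add_sq z).symm
  have hvol : volume.real (e ⁻¹' A) = volume.real A := by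
    rw [measureReal_def, he.measure_preimage_equiv, measureReal_def]
  have hnormInt : ∫ u in A, √(u.1 ^ 2 + u.2 ^ 2) = ∫ z in e ⁻¹' A, ‖z‖ := by
    rw [← hnorm]
    exact (he.setIntegral_preimage_emb e.measurableEmbedding _ A).symm
  have hball : volume.real (ball (0 : ℂ) 1) = Real.pi := by
    simp [measureReal_def, Complex.volume_ball]
  set R := √(volume.real A / Real.pi) with hR
  have hdisc : R * volume.real A - ∫ z in e ⁻¹' A, ‖z‖ ≤ Real.pi * R ^ 3 / 3 := by
    have h := mul_measureReal_sub_setIntegral_norm_le (E := ℂ) volume (A := e ⁻¹' A) (R := R)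
      (by rwa [he.measure_preimage_equiv])
      (hnorm ▸ (he.integrableOn_comp_preimage e.measurableEmbedding).2 hint) (Real.sqrt_nonneg _)
    rw [hvol, hball, Complex.finrank_real_complex] at h
    norm_num at h
    linarith
  have hRsq : Real.pi * R ^ 2 = volume.real A := by
    rw [hR, Real.sq_sqrt (by positivity)]
    field_simp
  rw [hnormInt]
  linear_combination hdisc + R / 3 * hRsq

end Rearrangement

section LatticePointsInThePlane

/-- The half-open `a × b` rectangle centred at `z`; the cells centred at the points of the lattice
`aℤ × bℤ` tile the plane. -/
def latticeCell (a b : ℝ) (z : ℝ × ℝ) : Set (ℝ × ℝ) :=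
  Ioc (z.1 - a / 2) (z.1 + a / 2) ×ˢ Ioc (z.2 - b / 2) (z.2 + b / 2)

variable {a b : ℝ}

lemma measurableSet_latticeCell (a b : ℝ) (z : ℝ × ℝ) : MeasurableSet (latticeCell a b z) :=
  measurableSet_Ioc.prod measurableSet_Ioc

lemma volume_latticeCell_ne_top (a b : ℝ) (z : ℝ × ℝ) : volume (latticeCell a b z) ≠ ⊤ := by
  rw [latticeCell, Measure.volume_eq_prod, Measure.prod_prod]
  exact ENNReal.mul_ne_top measure_Ioc_lt_top.ne measure_Ioc_lt_top.ne

lemma volume_real_latticeCell (ha : 0 ≤ a) (hb : 0 ≤ b) (z : ℝ × ℝ) :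
    volume.real (latticeCell a b z) = a * b := by
  rw [latticeCell, Measure.volume_eq_prod, measureReal_prod_prod,
    Real.volume_real_Ioc_of_le (by linarith), Real.volume_real_Ioc_of_le (by linarith)]
  ring

lemma integrableOn_latticeCell (z : ℝ × ℝ) {f : ℝ × ℝ → ℝ} (hf : Continuous f) :
    IntegrableOn f (latticeCell a b z) :=
  (hf.continuousOn.integrableOn_compact (isCompact_Icc.prod isCompact_Icc)).mono_set
    (prod_mono Ioc_subset_Icc_self Ioc_subset_Icc_self)

lemma eq_of_mem_Ioc_of_mem_Ioc {i j : ℤ} {x : ℝ}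
    (hi : x ∈ Ioc (i * a - a / 2) (i * a + a / 2))
    (hj : x ∈ Ioc (j * a - a / 2) (j * a + a / 2)) : i = j := by
  have hshift (k : ℤ) : Ioc (k * a - a / 2) (k * a + a / 2) =
      Ioc (-(a / 2) + k • a) (-(a / 2) + (k + 1) • a) := by
    simp only [zsmul_eq_mul]
    push_cast
    congr 1 <;> ring
  rw [hshift] at hi hj
  by_contra hne
  exact (pairwise_disjoint_Ioc_add_zsmul (-(a / 2)) a hne).le_bot ⟨hi, hj⟩

lemma pairwiseDisjoint_latticeCell {s : Set (ℝ × ℝ)}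
    (hs : ∀ z ∈ s, (∃ i : ℤ, z.1 = i * a) ∧ ∃ j : ℤ, z.2 = j * b) :
    s.PairwiseDisjoint (latticeCell a b) := by
  refine fun z hz w hw hne ↦ Set.disjoint_left.2 fun u huz huw ↦ hne ?_
  obtain ⟨⟨i, hi⟩, j, hj⟩ := hs z hz
  obtain ⟨⟨i', hi'⟩, j', hj'⟩ := hs w hw
  rw [latticeCell, hi, hj] at huz
  rw [latticeCell, hi', hj'] at huw
  ext
  · rw [hi, hi', eq_of_mem_Ioc_of_mem_Ioc huz.1 huw.1]
  · rw [hj, hj', eq_of_mem_Ioc_of_mem_Ioc huz.2 huw.2]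

lemma setIntegral_Ioc_sq (ha : 0 ≤ a) (c : ℝ) :
    ∫ x in Ioc (c - a / 2) (c + a / 2), x ^ 2 = a * (c ^ 2 + a ^ 2 / 12) := by
  rw [← intervalIntegral.integral_of_le (by linarith), integral_pow]
  norm_num
  ring

lemma setIntegral_latticeCell_sq_add_sq (ha : 0 ≤ a) (hb : 0 ≤ b) (z : ℝ × ℝ) :
    ∫ u in latticeCell a b z, (u.1 ^ 2 + u.2 ^ 2) =
      a * b * (z.1 ^ 2 + z.2 ^ 2 + (a ^ 2 + b ^ 2) / 12) := by
  have hside {c t : ℝ} (ht : 0 ≤ t) : ∫ _ in Ioc (c - t / 2) (c + t / 2), (1 : ℝ) = t := by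
    rw [setIntegral_const, Real.volume_real_Ioc_of_le (by linarith), smul_eq_mul]
    ring
  have hfst : ∫ u in latticeCell a b z, u.1 ^ 2 = a * (z.1 ^ 2 + a ^ 2 / 12) * b := by
    have h := setIntegral_prod_mul (μ := volume) (ν := volume) (fun x : ℝ ↦ x ^ 2)
      (fun _ : ℝ ↦ (1 : ℝ)) (Ioc (z.1 - a / 2) (z.1 + a / 2)) (Ioc (z.2 - b / 2) (z.2 + b / 2))
    simp only [mul_one] at h
    rw [latticeCell, Measure.volume_eq_prod, h, setIntegral_Ioc_sq ha, hside hb]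
  have hsnd : ∫ u in latticeCell a b z, u.2 ^ 2 = a * (b * (z.2 ^ 2 + b ^ 2 / 12)) := by
    have h := setIntegral_prod_mul (μ := volume) (ν := volume) (fun _ : ℝ ↦ (1 : ℝ))
      (fun y : ℝ ↦ y ^ 2) (Ioc (z.1 - a / 2) (z.1 + a / 2)) (Ioc (z.2 - b / 2) (z.2 + b / 2))
    simp only [one_mul] at h
    rw [latticeCell, Measure.volume_eq_prod, h, setIntegral_Ioc_sq hb, hside ha]
  rw [integral_add (integrableOn_latticeCell z (by fun_prop))
    (integrableOn_latticeCell z (by fun_prop)), hfst, hsnd]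
  ring

lemma setIntegral_latticeCell_sqrt_le (ha : 0 < a) (hb : 0 < b) (z : ℝ × ℝ) :
    ∫ u in latticeCell a b z, √(u.1 ^ 2 + u.2 ^ 2) ≤
      a * b * (√(z.1 ^ 2 + z.2 ^ 2) + √((a ^ 2 + b ^ 2) / 12)) := by
  -- The mean of `‖u‖²` over the cell is `m²`, so averaging `2 m ‖u‖ ≤ m² + ‖u‖²` bounds the mean
  -- of `‖u‖` by `m`.
  set m := √(z.1 ^ 2 + z.2 ^ 2 + (a ^ 2 + b ^ 2) / 12)
  have hm0 : 0 < m := by positivity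
  have hmsq : z.1 ^ 2 + z.2 ^ 2 + (a ^ 2 + b ^ 2) / 12 = m ^ 2 :=
    (Real.sq_sqrt (by positivity)).symm
  have tangent (u : ℝ × ℝ) :
      √(u.1 ^ 2 + u.2 ^ 2) ≤ m / 2 + (u.1 ^ 2 + u.2 ^ 2) / (2 * m) := by
    have hsq : √(u.1 ^ 2 + u.2 ^ 2) ^ 2 = u.1 ^ 2 + u.2 ^ 2 := Real.sq_sqrt (by positivity)
    nth_rewrite 2 [← hsq]
    field_simp
    linarith [two_mul_le_add_sq m √(u.1 ^ 2 + u.2 ^ 2)]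
  calc ∫ u in latticeCell a b z, √(u.1 ^ 2 + u.2 ^ 2)
      ≤ ∫ u in latticeCell a b z, (m / 2 + (u.1 ^ 2 + u.2 ^ 2) / (2 * m)) :=
        setIntegral_mono (integrableOn_latticeCell z (by fun_prop))
          (integrableOn_latticeCell z (by fun_prop)) tangent
    _ = a * b * m := by
        rw [integral_add (integrableOn_latticeCell z (by fun_prop))
          (integrableOn_latticeCell z (by fun_prop)), setIntegral_const, integral_div,
          setIntegral_latticeCell_sq_add_sq ha.le hb.le, hmsq,
          volume_real_latticeCell ha.le hb.le, smul_eq_mul]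
        field_simp
        ring
    _ ≤ a * b * (√(z.1 ^ 2 + z.2 ^ 2) + √((a ^ 2 + b ^ 2) / 12)) := by
        gcongr
        exact sqrt_add_le_sqrt_add_sqrt (by positivity) (by positivity)

lemma two_thirds_mul_card_mul_sqrt_le_sum (ha : 0 < a) (hb : 0 < b) {s : Finset (ℝ × ℝ)}
    (hs : ∀ z ∈ s, (∃ i : ℤ, z.1 = i * a) ∧ ∃ j : ℤ, z.2 = j * b) :
    2 / 3 * s.card * √(s.card * (a * b) / Real.pi) ≤
      ∑ z ∈ s, √(z.1 ^ 2 + z.2 ^ 2) + s.card * √((a ^ 2 + b ^ 2) / 12) := by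
  let A := ⋃ z ∈ s, latticeCell a b z
  have hdisj : (s : Set (ℝ × ℝ)).PairwiseDisjoint (latticeCell a b) :=
    pairwiseDisjoint_latticeCell hs
  have hint (z : ℝ × ℝ) :
      IntegrableOn (fun u : ℝ × ℝ ↦ √(u.1 ^ 2 + u.2 ^ 2)) (latticeCell a b z) :=
    integrableOn_latticeCell z (by fun_prop)
  have hvol : volume.real A = s.card * (a * b) := by
    rw [measureReal_biUnion_finset hdisj (fun z _ ↦ measurableSet_latticeCell a b z)
      fun z _ ↦ volume_latticeCell_ne_top a b z]
    simp [volume_real_latticeCell ha.le hb.le]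
  have hfin : volume A ≠ ⊤ :=
    (measure_biUnion_lt_top s.finite_toSet fun z _ ↦ (volume_latticeCell_ne_top a b z).lt_top).ne
  have hsum : 2 / 3 * (s.card * (a * b)) * √(s.card * (a * b) / Real.pi) ≤
      ∑ z ∈ s, a * b * (√(z.1 ^ 2 + z.2 ^ 2) + √((a ^ 2 + b ^ 2) / 12)) :=
    calc 2 / 3 * (s.card * (a * b)) * √(s.card * (a * b) / Real.pi)
        ≤ ∫ u in A, √(u.1 ^ 2 + u.2 ^ 2) := by
          rw [← hvol]
          exact two_thirds_mul_volume_mul_sqrt_le_setIntegral hfin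
            (integrableOn_finset_iUnion.2 fun z _ ↦ hint z)
      _ = ∑ z ∈ s, ∫ u in latticeCell a b z, √(u.1 ^ 2 + u.2 ^ 2) :=
          integral_biUnion_finset s (fun z _ ↦ measurableSet_latticeCell a b z) hdisj
            fun z _ ↦ hint z
      _ ≤ _ := Finset.sum_le_sum fun z _ ↦ setIntegral_latticeCell_sqrt_le ha hb z
  rw [← Finset.mul_sum, Finset.sum_add_distrib, Finset.sum_const, nsmul_eq_mul] at hsum
  refine le_of_mul_le_mul_left ?_ (mul_pos ha hb)
  linarith

lemma card_rpow_le_of_subset_planar_lattice {p : ℝ} (hp : 1 ≤ p) (ha : 0 < a) (hb : 0 < b)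
    {s : Finset (ℝ × ℝ)} (hs : ∀ z ∈ s, (∃ i : ℤ, z.1 = i * a) ∧ ∃ j : ℤ, z.2 = j * b) :
    (s.card : ℝ) ^ (1 / p + 1 / 2) ≤ 3 * √Real.pi / 2 *
      ((∑ z ∈ s, √(z.1 ^ 2 + z.2 ^ 2) ^ p) ^ (1 / p) +
        (s.card : ℝ) ^ (1 / p) * √((a ^ 2 + b ^ 2) / 12)) / √(a * b) := by
  rcases s.eq_empty_or_nonempty with rfl | hne
  · have h : (0 : ℝ) ^ (1 / p + 1 / 2) = 0 := Real.zero_rpow (by positivity)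
    simp only [Finset.card_empty, Nat.cast_zero, h]
    positivity
  have hmean := card_rpow_mul_sum_le s (f := fun z : ℝ × ℝ ↦ √(z.1 ^ 2 + z.2 ^ 2))
    (fun z ↦ Real.sqrt_nonneg _) hp
  have hdisc := two_thirds_mul_card_mul_sqrt_le_sum ha hb hs
  have hN : 0 < (s.card : ℝ) := by exact_mod_cast hne.card_pos
  set N : ℝ := (s.card : ℝ)
  set ρ := √((a ^ 2 + b ^ 2) / 12)
  have hpow : N ^ (1 / p - 1) * N = N ^ (1 / p) := by
    rw [← Real.rpow_add_one hN.ne', sub_add_cancel]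
  have hsqrt : √(N * (a * b) / Real.pi) = √N * √(a * b) / √Real.pi := by
    rw [Real.sqrt_div (by positivity), Real.sqrt_mul hN.le]
  have key : 2 / 3 * (N ^ (1 / p) * √N) * √(a * b) / √Real.pi ≤
      (∑ z ∈ s, √(z.1 ^ 2 + z.2 ^ 2) ^ p) ^ (1 / p) + N ^ (1 / p) * ρ :=
    calc 2 / 3 * (N ^ (1 / p) * √N) * √(a * b) / √Real.pi
        = N ^ (1 / p - 1) * (2 / 3 * N * √(N * (a * b) / Real.pi)) := by
          rw [hsqrt, ← hpow]
          ring
      _ ≤ N ^ (1 / p - 1) * (∑ z ∈ s, √(z.1 ^ 2 + z.2 ^ 2) + N * ρ) := by gcongr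
      _ = N ^ (1 / p - 1) * ∑ z ∈ s, √(z.1 ^ 2 + z.2 ^ 2) + N ^ (1 / p) * ρ := by
          rw [mul_add, ← mul_assoc, hpow]
      _ ≤ _ := by gcongr
  rw [Real.rpow_add hN, ← Real.sqrt_eq_rpow, le_div_iff₀ (by positivity)]
  rw [div_le_iff₀ (by positivity)] at key
  linarith

end LatticePointsInThePlane

section Types

lemma sum_support_le_mul_finsum {ι : Type*} {Q : ι → ℝ} {n : ℝ} (hQ : Q.support.Finite)
    (hn : ∀ i, Q i ≠ 0 → 1 ≤ n * Q i) {g : ι → ℝ} (hg : ∀ i, 0 ≤ g i) :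
    ∑ i ∈ hQ.toFinset, g i ≤ n * ∑ᶠ i, Q i * g i := by
  rw [finsum_eq_sum_of_support_subset (s := hQ.toFinset) _ fun i hi ↦ by
    simpa using left_ne_zero_of_mul hi, Finset.mul_sum]
  refine Finset.sum_le_sum fun i hi ↦ ?_
  rw [← mul_assoc]
  exact le_mul_of_one_le_left (hg i) (hn i (by simpa using hi))

lemma finsum_margX_mul {P : ℝ × ℝ → ℝ} (hP : P.support.Finite) (g : ℝ → ℝ) :
    ∑ᶠ x, margX P x * g x = ∑ᶠ z, P z * g z.1 := by
  rw [finsum_curry _ (hP.subset fun z hz ↦ left_ne_zero_of_mul hz)]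
  exact finsum_congr fun x ↦ finsum_mul _ _

lemma exists_ne_zero_of_margX_ne_zero {P : ℝ × ℝ → ℝ} {x : ℝ} (hx : margX P x ≠ 0) :
    ∃ y, P (x, y) ≠ 0 := by
  contrapose! hx
  simp [margX, hx]

namespace IsJointType

variable {n : ℕ} {p cX cY Δx Δy : ℝ} {P : ℝ × ℝ → ℝ}

lemma nonneg (hP : IsJointType n Δx Δy P) (z : ℝ × ℝ) : 0 ≤ P z := hP.1 z

lemma mem_lattice (hP : IsJointType n Δx Δy P) {z : ℝ × ℝ} (hz : P z ≠ 0) :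
    (∃ i : ℤ, z.1 = i * Δx) ∧ ∃ j : ℤ, z.2 = j * Δy := hP.2.1 z hz

lemma finite_support (hP : IsJointType n Δx Δy P) : P.support.Finite := hP.2.2.2.1

lemma finsum_eq_one (hP : IsJointType n Δx Δy P) : ∑ᶠ z, P z = 1 := hP.2.2.2.2

lemma one_le_mul (hP : IsJointType n Δx Δy P) {z : ℝ × ℝ} (hz : P z ≠ 0) : 1 ≤ n * P z := by
  obtain ⟨k, hk⟩ := hP.2.2.1 z
  rw [hk] at hz ⊢
  have hn : (n : ℝ) ≠ 0 := (div_ne_zero_iff.1 hz).2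
  have hk0 : k ≠ 0 := by exact_mod_cast (div_ne_zero_iff.1 hz).1
  rw [mul_div_cancel₀ _ hn]
  exact_mod_cast Nat.one_le_iff_ne_zero.2 hk0

lemma pos (hP : IsJointType n Δx Δy P) : 0 < n := by
  refine Nat.pos_of_ne_zero fun hn ↦ one_ne_zero (α := ℝ) ?_
  rw [← hP.finsum_eq_one]
  refine finsum_eq_zero_of_forall_eq_zero fun z ↦ not_not.1 fun hz ↦ ?_
  have := hP.one_le_mul hz
  norm_num [hn] at this

lemma swap (hP : IsJointType n Δx Δy P) : IsJointType n Δy Δx (P ∘ Prod.swap) :=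
  ⟨fun _ ↦ hP.nonneg _, fun _ hz ↦ (hP.mem_lattice hz).symm, fun _ ↦ hP.2.2.1 _,
    hP.finite_support.preimage Prod.swap_injective.injOn,
    (finsum_comp_equiv (Equiv.prodComm ℝ ℝ)).trans hP.finsum_eq_one⟩

lemma margX_nonneg (hP : IsJointType n Δx Δy P) (x : ℝ) : 0 ≤ margX P x :=
  finsum_nonneg fun _ ↦ hP.nonneg _

lemma one_le_mul_margX (hP : IsJointType n Δx Δy P) {x : ℝ} (hx : margX P x ≠ 0) :
    1 ≤ n * margX P x := by
  obtain ⟨y, hy⟩ := exists_ne_zero_of_margX_ne_zero hx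
  have hfin : (Function.support fun y ↦ P (x, y)).Finite :=
    hP.finite_support.preimage (Prod.mk_right_injective x).injOn
  refine (hP.one_le_mul hy).trans ?_
  gcongr
  exact single_le_finsum y hfin fun _ ↦ hP.nonneg _

lemma finite_support_margX (hP : IsJointType n Δx Δy P) : (margX P).support.Finite := by
  refine (hP.finite_support.image Prod.fst).subset fun x hx ↦ ?_
  obtain ⟨y, hy⟩ := exists_ne_zero_of_margX_ne_zero hx
  exact ⟨(x, y), hy, rfl⟩

lemma moment_margX_nonneg (hP : IsJointType n Δx Δy P) :
    0 ≤ ∑ᶠ x, margX P x * |x| ^ p :=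
  finsum_nonneg fun x ↦ mul_nonneg (hP.margX_nonneg x) (by positivity)

lemma card_support_le (hP : IsJointType n Δx Δy P) :
    hP.finite_support.toFinset.card ≤ n := by
  rw [← Nat.cast_le (α := ℝ)]
  simpa [hP.finsum_eq_one] using
    sum_support_le_mul_finsum hP.finite_support (fun _ ↦ hP.one_le_mul) (g := 1)
      fun _ ↦ zero_le_one

lemma sum_support_abs_fst_rpow_le (hP : IsJointType n Δx Δy P)
    (hcX : ∑ᶠ x, margX P x * |x| ^ p ≤ cX) :
    ∑ z ∈ hP.finite_support.toFinset, |z.1| ^ p ≤ n * cX :=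
  calc ∑ z ∈ hP.finite_support.toFinset, |z.1| ^ p ≤ n * ∑ᶠ z, P z * |z.1| ^ p :=
        sum_support_le_mul_finsum hP.finite_support (fun _ ↦ hP.one_le_mul) fun _ ↦ by positivity
    _ = n * ∑ᶠ x, margX P x * |x| ^ p := by
        rw [finsum_margX_mul hP.finite_support fun x ↦ |x| ^ p]
    _ ≤ n * cX := by gcongr

lemma sum_support_abs_snd_rpow_le (hP : IsJointType n Δx Δy P)
    (hcY : ∑ᶠ y, margY P y * |y| ^ p ≤ cY) :
    ∑ z ∈ hP.finite_support.toFinset, |z.2| ^ p ≤ n * cY := by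
  refine le_of_eq_of_le ?_ (hP.swap.sum_support_abs_fst_rpow_le hcY)
  exact Finset.sum_equiv (Equiv.prodComm ℝ ℝ) (by simp) (by simp)

theorem ncard_support_margX_le (hP : IsJointType n Δx Δy P) (hp : 1 ≤ p) (hΔ : 0 < Δx)
    (hΔ1 : Δx ≤ 1) (hcX : ∑ᶠ x, margX P x * |x| ^ p ≤ cX) :
    ((margX P).support.ncard : ℝ) ≤ c2 p cX * (n ^ (1 / p) / Δx) ^ (p / (1 + p)) := by
  have hn : (1 : ℝ) ≤ n := by exact_mod_cast hP.pos
  have hc : 0 ≤ cX := hP.moment_margX_nonneg.trans hcX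
  have hlattice : ∀ x ∈ hP.finite_support_margX.toFinset, ∃ i : ℤ, x = i * Δx := fun x hx ↦ by
    obtain ⟨y, hy⟩ := exists_ne_zero_of_margX_ne_zero (by simpa using hx)
    exact (hP.mem_lattice hy).1
  have hsum : ∑ x ∈ hP.finite_support_margX.toFinset, |x| ^ p ≤ n * cX :=
    (sum_support_le_mul_finsum hP.finite_support_margX (fun _ ↦ hP.one_le_mul_margX)
      fun _ ↦ by positivity).trans (by gcongr)
  have hscale : 1 ≤ (n : ℝ) ^ (1 / p) / Δx :=
    (one_le_div hΔ).2 (hΔ1.trans (Real.one_le_rpow hn (by positivity)))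
  have hexp : p / (1 + p) = (1 / p + 1)⁻¹ := by field_simp
  rw [ncard_eq_toFinset_card _ hP.finite_support_margX, c2, hexp]
  refine le_rpow_inv_mul_rpow_inv (by positivity) (by positivity) (by positivity) (by positivity) ?_
  calc (hP.finite_support_margX.toFinset.card : ℝ) ^ (1 / p + 1)
      ≤ 4 * (∑ x ∈ hP.finite_support_margX.toFinset, |x| ^ p) ^ (1 / p) / Δx + 1 :=
        card_rpow_le_of_subset_lattice hp hΔ hlattice
    _ ≤ 4 * (n * cX) ^ (1 / p) / Δx + n ^ (1 / p) / Δx := by gcongr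
    _ = (4 * cX ^ (1 / p) + 1) * (n ^ (1 / p) / Δx) := by
        rw [Real.mul_rpow (by positivity) hc]
        ring

theorem ncard_support_margY_le (hP : IsJointType n Δx Δy P) (hp : 1 ≤ p) (hΔ : 0 < Δy)
    (hΔ1 : Δy ≤ 1) (hcY : ∑ᶠ y, margY P y * |y| ^ p ≤ cY) :
    ((margY P).support.ncard : ℝ) ≤ c3 p cY * (n ^ (1 / p) / Δy) ^ (p / (1 + p)) :=
  hP.swap.ncard_support_margX_le hp hΔ hΔ1 hcY

lemma sum_support_sqrt_rpow_rpow_le (hP : IsJointType n Δx Δy P) (hp : 0 < p)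
    (hcX : ∑ᶠ x, margX P x * |x| ^ p ≤ cX) (hcY : ∑ᶠ y, margY P y * |y| ^ p ≤ cY) :
    (∑ z ∈ hP.finite_support.toFinset, √(z.1 ^ 2 + z.2 ^ 2) ^ p) ^ (1 / p) ≤
      2 ^ max 0 (1 / 2 - 1 / p) * (cX + cY) ^ (1 / p) * n ^ (1 / p) := by
  have hc : 0 ≤ cX + cY :=
    add_nonneg (hP.moment_margX_nonneg.trans hcX) (hP.swap.moment_margX_nonneg.trans hcY)
  set K : ℝ := 2 ^ max 0 (1 / 2 - 1 / p)
  have hK : 0 ≤ K := by positivity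
  have hsum : ∑ z ∈ hP.finite_support.toFinset, √(z.1 ^ 2 + z.2 ^ 2) ^ p ≤
      K ^ p * ((cX + cY) * n) :=
    calc ∑ z ∈ hP.finite_support.toFinset, √(z.1 ^ 2 + z.2 ^ 2) ^ p
        ≤ ∑ z ∈ hP.finite_support.toFinset, K ^ p * (|z.1| ^ p + |z.2| ^ p) :=
          Finset.sum_le_sum fun z _ ↦ sqrt_sq_add_sq_rpow_le z.1 z.2 hp
      _ = K ^ p * (∑ z ∈ hP.finite_support.toFinset, |z.1| ^ p +
            ∑ z ∈ hP.finite_support.toFinset, |z.2| ^ p) := by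
          rw [← Finset.mul_sum, Finset.sum_add_distrib]
      _ ≤ K ^ p * (n * cX + n * cY) := by
          gcongr
          exacts [hP.sum_support_abs_fst_rpow_le hcX, hP.sum_support_abs_snd_rpow_le hcY]
      _ = K ^ p * ((cX + cY) * n) := by ring
  calc (∑ z ∈ hP.finite_support.toFinset, √(z.1 ^ 2 + z.2 ^ 2) ^ p) ^ (1 / p)
      ≤ (K ^ p * ((cX + cY) * n)) ^ (1 / p) := by gcongr
    _ = K * (cX + cY) ^ (1 / p) * n ^ (1 / p) := by
        rw [Real.mul_rpow (by positivity) (by positivity), Real.mul_rpow hc (by positivity),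
          ← Real.rpow_mul hK, mul_one_div_cancel hp.ne', Real.rpow_one, mul_assoc]

theorem ncard_support_le (hP : IsJointType n Δx Δy P) (hp : 1 ≤ p) (hΔx : 0 < Δx) (hΔx1 : Δx ≤ 1)
    (hΔy : 0 < Δy) (hΔy1 : Δy ≤ 1) (hcX : ∑ᶠ x, margX P x * |x| ^ p ≤ cX)
    (hcY : ∑ᶠ y, margY P y * |y| ^ p ≤ cY) :
    (P.support.ncard : ℝ) ≤ c1 p cX cY * (n ^ (1 / p) / √(Δx * Δy)) ^ (2 * p / (2 + p)) := by
  have hp0 : 0 < p := by linarith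
  have hc : 0 ≤ cX + cY :=
    add_nonneg (hP.moment_margX_nonneg.trans hcX) (hP.swap.moment_margX_nonneg.trans hcY)
  have hcell : √((Δx ^ 2 + Δy ^ 2) / 12) ≤ 1 / √6 := by
    rw [← Real.sqrt_one, ← Real.sqrt_div zero_le_one]
    refine Real.sqrt_le_sqrt ?_
    nlinarith
  have hexp : 2 * p / (2 + p) = (1 / p + 1 / 2)⁻¹ := by field_simp
  rw [ncard_eq_toFinset_card _ hP.finite_support, c1, hexp]
  refine le_rpow_inv_mul_rpow_inv (by positivity) (by positivity) (by positivity) (by positivity) ?_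
  calc (hP.finite_support.toFinset.card : ℝ) ^ (1 / p + 1 / 2)
      ≤ 3 * √Real.pi / 2 *
          ((∑ z ∈ hP.finite_support.toFinset, √(z.1 ^ 2 + z.2 ^ 2) ^ p) ^ (1 / p) +
            (hP.finite_support.toFinset.card : ℝ) ^ (1 / p) * √((Δx ^ 2 + Δy ^ 2) / 12)) /
          √(Δx * Δy) :=
        card_rpow_le_of_subset_planar_lattice hp hΔx hΔy fun z hz ↦
          hP.mem_lattice (by simpa using hz)
    _ ≤ 3 * √Real.pi / 2 *
          (2 ^ max 0 (1 / 2 - 1 / p) * (cX + cY) ^ (1 / p) * n ^ (1 / p) +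
            n ^ (1 / p) * (1 / √6)) / √(Δx * Δy) := by
        gcongr
        exacts [hP.sum_support_sqrt_rpow_rpow_le hp0 hcX hcY, hP.card_support_le]
    _ = 3 * √Real.pi / 2 * (2 ^ max 0 (1 / 2 - 1 / p) * (cX + cY) ^ (1 / p) + 1 / √6) *
          (n ^ (1 / p) / √(Δx * Δy)) := by ring

end IsJointType

end Types

lemma rpow_div_rpow_neg_rpow {n p : ℝ} (hn : 0 < n) (hp : 0 < p) (α : ℝ) :
    (n ^ (1 / p) / n ^ (-α)) ^ (p / (1 + p)) = n ^ ((1 + p * α) / (1 + p)) := by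
  rw [← Real.rpow_sub hn, ← Real.rpow_mul hn.le]
  congr 1
  field_simp
  ring

lemma rpow_div_sqrt_rpow_neg_rpow {n p : ℝ} (hn : 0 < n) (hp : 0 < p) (α β : ℝ) :
    (n ^ (1 / p) / √(n ^ (-α) * n ^ (-β))) ^ (2 * p / (2 + p)) =
      n ^ ((2 + p * (α + β)) / (2 + p)) := by
  rw [← Real.rpow_add hn, Real.sqrt_eq_rpow, ← Real.rpow_mul hn.le, ← Real.rpow_sub hn,
    ← Real.rpow_mul hn.le]
  congr 1
  field_simp
  ring

theorem support_of_type_general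
    (n : ℕ) (p cX cY α β : ℝ) (hp : 1 ≤ p) (hα : 0 ≤ α) (hβ : 0 ≤ β)
    (P : ℝ × ℝ → ℝ) (hP : IsJointType n ((n : ℝ) ^ (-α)) ((n : ℝ) ^ (-β)) P)
    (hcX : (∑ᶠ x, margX P x * |x| ^ p) ≤ cX)
    (hcY : (∑ᶠ y, margY P y * |y| ^ p) ≤ cY) :
    ((Function.support P).ncard : ℝ) ≤ c1 p cX cY * (n : ℝ) ^ ((2 + p * (α + β)) / (2 + p)) ∧
    ((Function.support (margX P)).ncard : ℝ) ≤ c2 p cX * (n : ℝ) ^ ((1 + p * α) / (1 + p)) ∧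
    ((Function.support (margY P)).ncard : ℝ) ≤ c3 p cY * (n : ℝ) ^ ((1 + p * β) / (1 + p)) := by
  have hp0 : 0 < p := by linarith
  have hn0 : (0 : ℝ) < n := by exact_mod_cast hP.pos
  have hn1 : (1 : ℝ) ≤ n := by exact_mod_cast hP.pos
  have mesh_pos (γ : ℝ) : 0 < (n : ℝ) ^ (-γ) := Real.rpow_pos_of_pos hn0 _
  have mesh_le_one {γ : ℝ} (hγ : 0 ≤ γ) : (n : ℝ) ^ (-γ) ≤ 1 :=
    Real.rpow_le_one_of_one_le_of_nonpos hn1 (neg_nonpos.2 hγ)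
  rw [← rpow_div_sqrt_rpow_neg_rpow hn0 hp0, ← rpow_div_rpow_neg_rpow hn0 hp0 α,
    ← rpow_div_rpow_neg_rpow hn0 hp0 β]
  exact ⟨hP.ncard_support_le hp (mesh_pos α) (mesh_le_one hα) (mesh_pos β) (mesh_le_one hβ) hcX hcY,
    hP.ncard_support_margX_le hp (mesh_pos α) (mesh_le_one hα) hcX,
    hP.ncard_support_margY_le hp (mesh_pos β) (mesh_le_one hβ) hcY⟩

/-- Lemma 2 (Support of a type): bounds on the supports of a joint type and its marginals
under generalized power constraints. -/
theorem support_of_type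
    (n : ℕ) (hn : 0 < n) (p cX cY α β : ℝ) (hp : 1 ≤ p)
    (hα : α ∈ Set.Ioo (0 : ℝ) 1) (hβ : β ∈ Set.Ioo (0 : ℝ) 1)
    (P : ℝ × ℝ → ℝ) (hP : IsJointType n ((n : ℝ) ^ (-α)) ((n : ℝ) ^ (-β)) P)
    (hcX : (∑ᶠ x, margX P x * |x| ^ p) ≤ cX)
    (hcY : (∑ᶠ y, margY P y * |y| ^ p) ≤ cY) :
    ((Function.support P).ncard : ℝ) ≤ c1 p cX cY * (n : ℝ) ^ ((2 + p * (α + β)) / (2 + p)) ∧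
    ((Function.support (margX P)).ncard : ℝ) ≤ c2 p cX * (n : ℝ) ^ ((1 + p * α) / (1 + p)) ∧
    ((Function.support (margY P)).ncard : ℝ) ≤ c3 p cY * (n : ℝ) ^ ((1 + p * β) / (1 + p)) :=
  support_of_type_general n p cX cY α β hp hα.1.le hβ.1.le P hP hcX hcY
end
end
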